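/- arXiv:2409.04028 — 2 statements merged into one kernel-verified Lean document; each statement's English description precedes it below -/
import Mathlib

section
/- Let f : 𝔹 → ℂ be holomorphic with f(0) = 1, F(x) = f(x)·x for x ∈ 𝔹, and assume F is biholomorphic on 𝔹. Then for all x ∈ 𝔹, ‖x‖/(1+‖x‖)² ≤ ‖F(x)‖ ≤ ‖x‖/(1−‖x‖)². -/
open Metric Set

noncomputable section

/-- A holomorphic map is biholomorphic on an open set `s` if it is holomorphic and injective
on `s` and admits a holomorphic inverse on the image `f '' s`. -/
def IsBiholoOn {E₁ E₂ : Type*} [NormedAddCommGroup E₁] [NormedSpace ℂ E₁]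
    [NormedAddCommGroup E₂] [NormedSpace ℂ E₂] (f : E₁ → E₂) (s : Set E₁) : Prop :=
  DifferentiableOn ℂ f s ∧ Set.InjOn f s ∧
    ∃ g : E₂ → E₁, DifferentiableOn ℂ g (f '' s) ∧ ∀ x ∈ s, g (f x) = x

/-!
Restricting `F` to a complex line through `0` gives a schlicht function `φ z = f (z • u) * z` on the
unit disc, where `u` is a unit vector, so the theorem reduces to the growth theorem in one variable.

Gronwall's area argument is run on an odd schlicht function with reciprocal
`g z = z⁻¹ + b * z + O(z ^ 2)`. The image under `g` of the annulus `ρ < ‖z‖ < 1` has area at least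
`π * (ρ⁻² - 1 + ‖b‖² * (1 - ρ²))`. It lies in the near-ellipse
`‖w - b * ρ² * conj w‖ ≤ ρ⁻¹ + O(ρ²)`, whose area is `π * ρ⁻² + O(ρ)`; as `ρ → 0` this forces
`‖b‖ ≤ 1`. No point of the image escapes the near-ellipse: for such a point `1 / w` the whole
segment from `0` to `w` would avoid the image of the circle `‖z‖ = ρ` under `1 / g`, putting `w` in
the image of the disc `‖z‖ < ρ`, against injectivity.

Applied to the odd square root of `φ (z ^ 2)`, this is Bieberbach's bound `‖φ'' 0‖ ≤ 4`. Moving the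
base point by a disc automorphism turns it into a bound on the logarithmic derivative of `φ'`, and
integrating along rays gives the distortion estimates
`(1 - r) / (1 + r) ^ 3 ≤ ‖φ' z‖ ≤ (1 + r) / (1 - r) ^ 3` with `r = ‖z‖`. A second integration along
rays gives the upper growth bound. For the lower one, take the point of the circle `‖z‖ = r` where
`‖φ‖` is smallest and integrate along the preimage of the segment from `0` to its value.
-/

open Filter MeasureTheory Topology
open scoped ComplexConjugate Real

theorem subset_image_of_disjoint_image_frontier {X Y : Type*} [TopologicalSpace X]
    [TopologicalSpace Y] [T2Space Y] {f : X → Y} {U : Set X} {S : Set Y}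
    (hU : IsCompact (closure U)) (hf : ContinuousOn f (closure U)) (hfU : IsOpen (f '' U))
    (hS : IsPreconnected S) (hne : (S ∩ f '' U).Nonempty)
    (hdisj : Disjoint S (f '' frontier U)) : S ⊆ f '' U := by
  refine hS.subset_of_closure_inter_subset hfU hne ?_
  rintro w ⟨hw, hwS⟩
  have hcl : closure (f '' U) ⊆ f '' closure U :=
    closure_minimal (image_mono subset_closure) (hU.image_of_continuousOn hf).isClosed
  obtain ⟨z, hz, rfl⟩ := hcl hw
  rw [closure_eq_self_union_frontier] at hz
  exact hz.elim (mem_image_of_mem f) fun h ↦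
    (disjoint_left.mp hdisj hwS (mem_image_of_mem f h)).elim

section Univalent

variable {f : ℂ → ℂ} {U : Set ℂ} {a : ℂ}

theorem not_eventually_apply_eq_of_injOn {X Y : Type*} [TopologicalSpace X] {g : X → Y} {V : Set X}
    {x : X} [(𝓝[≠] x).NeBot] (hV : V ∈ 𝓝 x) (hinj : InjOn g V) : ¬∀ᶠ y in 𝓝 x, g y = g x := by
  intro hconst
  have hV' : ∀ᶠ y in 𝓝[≠] x, y = x :=
    ((hconst.and hV).filter_mono nhdsWithin_le_nhds).mono fun y hy ↦
      hinj hy.2 (mem_of_mem_nhds hV) hy.1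
  obtain ⟨y, hyx, hy⟩ := (hV'.and eventually_mem_nhdsWithin).exists
  exact hy hyx

theorem nhds_le_map_nhds_of_injOn (hU : IsOpen U) (hf : DifferentiableOn ℂ f U)
    (hinj : InjOn f U) (ha : a ∈ U) : 𝓝 (f a) ≤ map f (𝓝 a) := by
  have hUa : U ∈ 𝓝 a := hU.mem_nhds ha
  exact (hf.analyticAt hUa).eventually_constant_or_nhds_le_map_nhds.resolve_left
    (not_eventually_apply_eq_of_injOn hUa hinj)

theorem isOpen_image_of_injOn (hU : IsOpen U) (hf : DifferentiableOn ℂ f U) (hinj : InjOn f U) :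
    IsOpen (f '' U) := by
  rw [isOpen_iff_mem_nhds]
  rintro _ ⟨a, ha, rfl⟩
  exact nhds_le_map_nhds_of_injOn hU hf hinj ha (image_mem_map (hU.mem_nhds ha))

theorem comp_invFunOn_eventuallyEq_id (hU : IsOpen U) (hf : DifferentiableOn ℂ f U)
    (hinj : InjOn f U) (ha : a ∈ U) : f ∘ Function.invFunOn f U =ᶠ[𝓝 (f a)] id := by
  filter_upwards [(isOpen_image_of_injOn hU hf hinj).mem_nhds (mem_image_of_mem f ha)]
    with w hw using Function.invFunOn_eq hw

theorem continuousAt_invFunOn_of_injOn (hU : IsOpen U) (hf : DifferentiableOn ℂ f U)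
    (hinj : InjOn f U) (ha : a ∈ U) : ContinuousAt (Function.invFunOn f U) (f a) := by
  have hleft : Function.invFunOn f U ∘ f =ᶠ[𝓝 a] id := by
    filter_upwards [hU.mem_nhds ha] with z hz using hinj.leftInvOn_invFunOn hz
  rw [ContinuousAt, hinj.leftInvOn_invFunOn ha]
  have hcomp : Tendsto (Function.invFunOn f U ∘ f) (𝓝 a) (𝓝 a) := tendsto_id.congr' hleft.symm
  exact (tendsto_map'_iff.mpr hcomp).mono_left (nhds_le_map_nhds_of_injOn hU hf hinj ha)

theorem hasDerivAt_invFunOn_of_deriv_ne_zero (hU : IsOpen U) (hf : DifferentiableOn ℂ f U)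
    (hinj : InjOn f U) (ha : a ∈ U) (hfa : deriv f a ≠ 0) :
    HasDerivAt (Function.invFunOn f U) (deriv f a)⁻¹ (f a) := by
  refine HasDerivAt.of_local_left_inverse (continuousAt_invFunOn_of_injOn hU hf hinj ha) ?_ hfa
    (comp_invFunOn_eventuallyEq_id hU hf hinj ha)
  rw [hinj.leftInvOn_invFunOn ha]
  exact (hf.differentiableAt (hU.mem_nhds ha)).hasDerivAt

theorem eventually_deriv_ne_zero_of_injOn (hU : IsOpen U) (hf : DifferentiableOn ℂ f U)
    (hinj : InjOn f U) (ha : a ∈ U) : ∀ᶠ z in 𝓝[≠] a, deriv f z ≠ 0 := by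
  have hUa : U ∈ 𝓝 a := hU.mem_nhds ha
  refine (hf.analyticAt hUa).deriv.eventually_eq_zero_or_eventually_ne_zero.resolve_left
    fun hzero ↦ not_eventually_apply_eq_of_injOn hUa hinj ?_
  obtain ⟨ε, hε, hball⟩ := Metric.eventually_nhds_iff_ball.mp (hzero.and hUa)
  filter_upwards [ball_mem_nhds a hε] with z hz
  exact isOpen_ball.is_const_of_deriv_eq_zero (convex_ball a ε).isPreconnected
    (hf.mono fun y hy ↦ (hball y hy).2) (fun y hy ↦ (hball y hy).1) hz (mem_ball_self hε)

-- At a zero `a` of `f'` the inverse would have an isolated singularity at `f a`; being continuous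
-- there it would be differentiable, which the chain rule forbids.
theorem deriv_ne_zero_of_injOn (hU : IsOpen U) (hf : DifferentiableOn ℂ f U) (hinj : InjOn f U)
    (ha : a ∈ U) : deriv f a ≠ 0 := by
  intro hfa
  have hUa : U ∈ 𝓝 a := hU.mem_nhds ha
  have hdiff : ∀ᶠ w in 𝓝[≠] f a, DifferentiableAt ℂ (Function.invFunOn f U) w := by
    have hne := eventually_nhdsWithin_iff.mp (eventually_deriv_ne_zero_of_injOn hU hf hinj ha)
    have himage := nhds_le_map_nhds_of_injOn hU hf hinj ha (image_mem_map (hne.and hUa))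
    rw [eventually_nhdsWithin_iff]
    filter_upwards [himage]
    rintro _ ⟨z, ⟨hz, hzU⟩, rfl⟩ hza
    have hfz : deriv f z ≠ 0 := hz fun h ↦ hza (congrArg f h)
    exact (hasDerivAt_invFunOn_of_deriv_ne_zero hU hf hinj hzU hfz).differentiableAt
  have hinv : DifferentiableAt ℂ (Function.invFunOn f U) (f a) :=
    (Complex.analyticAt_of_differentiable_on_punctured_nhds_of_continuousAt hdiff
      (continuousAt_invFunOn_of_injOn hU hf hinj ha)).differentiableAt
  have hfd : HasDerivAt f 0 (Function.invFunOn f U (f a)) := by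
    rw [hinj.leftInvOn_invFunOn ha, ← hfa]
    exact (hf.differentiableAt hUa).hasDerivAt
  exact not_differentiableAt_of_local_left_inverse_hasDerivAt_zero hfd
    (comp_invFunOn_eventuallyEq_id hU hf hinj ha) hinv

theorem hasDerivAt_invFunOn (hU : IsOpen U) (hf : DifferentiableOn ℂ f U) (hinj : InjOn f U)
    (ha : a ∈ U) : HasDerivAt (Function.invFunOn f U) (deriv f a)⁻¹ (f a) :=
  hasDerivAt_invFunOn_of_deriv_ne_zero hU hf hinj ha (deriv_ne_zero_of_injOn hU hf hinj ha)

theorem subset_image_ball_of_disjoint_image_sphere {r ρ : ℝ} {S : Set ℂ}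
    (hf : DifferentiableOn ℂ f (ball a r)) (hinj : InjOn f (ball a r)) (hρ : 0 < ρ) (hρr : ρ < r)
    (hS : IsPreconnected S) (haS : f a ∈ S) (hdisj : Disjoint S (f '' sphere a ρ)) :
    S ⊆ f '' ball a ρ := by
  have hsub : closure (ball a ρ) ⊆ ball a r :=
    closure_ball a hρ.ne' ▸ closedBall_subset_ball hρr
  have hsub' : ball a ρ ⊆ ball a r := ball_subset_ball hρr.le
  refine subset_image_of_disjoint_image_frontier ?_ (hf.continuousOn.mono hsub)
    (isOpen_image_of_injOn isOpen_ball (hf.mono hsub') (hinj.mono hsub')) hS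
    ⟨f a, haS, mem_image_of_mem f (mem_ball_self hρ)⟩ (frontier_ball a hρ.ne' ▸ hdisj)
  exact closure_ball a hρ.ne' ▸ isCompact_closedBall a ρ

end Univalent

theorem circleAverage_re {g : ℂ → ℂ} {c : ℂ} {R : ℝ} (hg : DiffContOnCl ℂ g (ball c |R|))
    (hgc : ContinuousOn g (sphere c |R|)) :
    Real.circleAverage (fun z ↦ (g z).re) c R = (g c).re := by
  rw [← hg.circleAverage]
  exact Complex.reCLM.circleAverage_comp_comm hgc.circleIntegrable'

theorem circleAverage_norm_const_add_mul_sq {h : ℂ → ℂ} {R : ℝ}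
    (hh : DifferentiableOn ℂ h (closedBall 0 |R|)) (a : ℂ) :
    Real.circleAverage (fun z ↦ ‖a + z * h z‖ ^ 2) 0 R =
      ‖a‖ ^ 2 + R ^ 2 * Real.circleAverage (fun z ↦ ‖h z‖ ^ 2) 0 R := by
  have hhc : ContinuousOn h (sphere 0 |R|) := hh.continuousOn.mono sphere_subset_closedBall
  have hcross : Real.circleAverage (fun z ↦ (conj a * (z * h z)).re) 0 R = 0 := by
    have hg : DifferentiableOn ℂ (fun z ↦ conj a * (z * h z)) (closedBall 0 |R|) := by fun_prop
    rw [circleAverage_re (hg.diffContOnCl_ball subset_rfl)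
      (hg.continuousOn.mono sphere_subset_closedBall)]
    simp
  have hexpand : EqOn (fun z ↦ ‖a + z * h z‖ ^ 2)
      (fun z ↦ ‖a‖ ^ 2 + ((2 : ℝ) • (conj a * (z * h z)).re + R ^ 2 • ‖h z‖ ^ 2))
      (sphere 0 |R|) := by
    intro z hz
    have hnz : ‖z‖ ^ 2 = R ^ 2 := by rw [mem_sphere_zero_iff_norm.mp hz, sq_abs]
    simp only [smul_eq_mul, ← hnz, ← mul_pow, ← norm_mul]
    simp only [← Complex.normSq_eq_norm_sq, Complex.normSq_apply, Complex.add_re, Complex.add_im,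
      Complex.mul_re, Complex.conj_re, Complex.conj_im]
    ring
  rw [Real.circleAverage_congr_sphere hexpand, Real.circleAverage_fun_add,
    Real.circleAverage_fun_add, Real.circleAverage_fun_smul, Real.circleAverage_fun_smul, hcross,
    Real.circleAverage_const, smul_zero, zero_add, smul_eq_mul]
  all_goals exact ContinuousOn.circleIntegrable' (by fun_prop)

theorem inv_pow_four_add_le_circleAverage {h : ℂ → ℂ} {R : ℝ} (hR : R ≠ 0)
    (hh : DifferentiableOn ℂ h (closedBall 0 |R|)) (b : ℂ) :
    (R ^ 4)⁻¹ + ‖b‖ ^ 2 ≤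
      Real.circleAverage (fun z ↦ ‖-(z ^ 2)⁻¹ + b + z * h z‖ ^ 2) 0 R := by
  have hfactor : EqOn (fun z ↦ ‖-(z ^ 2)⁻¹ + b + z * h z‖ ^ 2)
      (fun z ↦ (R ^ 4)⁻¹ • ‖-1 + z * (0 + z * (b + z * h z))‖ ^ 2) (sphere 0 |R|) := by
    intro z hz
    have hnz : ‖z‖ ^ 2 = R ^ 2 := by rw [mem_sphere_zero_iff_norm.mp hz, sq_abs]
    have hz0 : z ≠ 0 := ne_of_mem_sphere hz (abs_ne_zero.mpr hR)
    have hdiv : -(z ^ 2)⁻¹ + b + z * h z = (z ^ 2)⁻¹ * (-1 + z * (0 + z * (b + z * h z))) := by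
      field_simp
      ring
    simp only [hdiv, norm_mul, norm_inv, norm_pow, mul_pow, inv_pow, hnz, smul_eq_mul]
    ring
  have havg : 0 ≤ Real.circleAverage (fun z ↦ ‖h z‖ ^ 2) 0 R :=
    Real.circleAverage_nonneg_of_nonneg fun z _ ↦ sq_nonneg _
  rw [Real.circleAverage_congr_sphere hfactor, Real.circleAverage_fun_smul,
    circleAverage_norm_const_add_mul_sq (by fun_prop),
    circleAverage_norm_const_add_mul_sq (by fun_prop), circleAverage_norm_const_add_mul_sq hh]
  simp only [norm_neg, norm_one, norm_zero, smul_eq_mul]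
  calc (R ^ 4)⁻¹ + ‖b‖ ^ 2
      ≤ (R ^ 4)⁻¹ + ‖b‖ ^ 2 + R ^ 2 * Real.circleAverage (fun z ↦ ‖h z‖ ^ 2) 0 R :=
        le_add_of_nonneg_right (by positivity)
    _ = _ := by field_simp; ring

theorem lintegral_eq_lintegral_circleMap {f : ℂ → ENNReal} (hf : Measurable f) :
    ∫⁻ z, f z = ∫⁻ s in Ioi (0 : ℝ), ENNReal.ofReal s *
      ∫⁻ θ in Ioo (-π) π, f (circleMap 0 s θ) := by
  have hpolar : ∀ p : ℝ × ℝ, Complex.polarCoord.symm p = circleMap 0 p.1 p.2 := fun p ↦ by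
    simp [Complex.polarCoord_symm_apply, circleMap, Complex.exp_mul_I]
  have hmeas : Measurable fun p : ℝ × ℝ ↦ f (circleMap 0 p.1 p.2) :=
    hf.comp (by unfold circleMap; fun_prop)
  rw [← Complex.lintegral_comp_polarCoord_symm, polarCoord_target, Measure.volume_eq_prod,
    ← Measure.prod_restrict, lintegral_prod]
  · simp only [hpolar, smul_eq_mul]
    refine lintegral_congr fun s ↦ lintegral_const_mul _ ?_
    exact hmeas.comp measurable_prodMk_left
  · simp only [hpolar, smul_eq_mul]
    exact (ENNReal.measurable_ofReal.comp measurable_fst |>.mul hmeas).aemeasurable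

theorem lintegral_Ioo_ofReal_circleMap {D : ℂ → ℝ} {s : ℝ} (hD : ∀ z, 0 ≤ D z)
    (hint : CircleIntegrable D 0 s) :
    ∫⁻ θ in Ioo (-π) π, ENNReal.ofReal (D (circleMap 0 s θ)) =
      ENNReal.ofReal (2 * π * Real.circleAverage D 0 s) := by
  have hπ : -π ≤ π := by linarith [Real.pi_pos]
  have hper : Function.Periodic (fun θ ↦ D (circleMap 0 s θ)) (2 * π) :=
    (periodic_circleMap 0 s).comp D
  have hintegral : ∫ θ in (-π)..π, D (circleMap 0 s θ) = 2 * π * Real.circleAverage D 0 s := by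
    have hshift := hper.intervalIntegral_add_eq (-π) 0
    rw [show -π + 2 * π = π by ring, zero_add] at hshift
    rw [hshift, Real.circleAverage, smul_eq_mul, mul_inv_cancel_left₀ Real.two_pi_pos.ne']
  have hintegrable : IntervalIntegrable (fun θ ↦ D (circleMap 0 s θ)) volume (-π) π :=
    hper.intervalIntegrable₀ Real.two_pi_pos.ne' hint _ _
  rw [← hintegral, intervalIntegral.integral_of_le hπ, ofReal_integral_eq_lintegral_ofReal
    hintegrable.1 (ae_of_all _ fun θ ↦ hD _), restrict_Ioo_eq_restrict_Ioc]

theorem setLIntegral_preimage_norm {D : ℂ → ℝ} {S : Set ℝ} (hS : MeasurableSet S)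
    (hS0 : S ⊆ Ioi 0) (hDm : Measurable D) (hD : ∀ z, 0 ≤ D z)
    (hint : ∀ s ∈ S, CircleIntegrable D 0 s) :
    ∫⁻ z in norm ⁻¹' S, ENNReal.ofReal (D z) =
      ∫⁻ s in S, ENNReal.ofReal (2 * π * s * Real.circleAverage D 0 s) := by
  have hmeas : MeasurableSet (norm ⁻¹' S : Set ℂ) := measurable_norm hS
  have hrestrict : ∀ G : ℝ → ENNReal, ∫⁻ s in S, G s = ∫⁻ s in Ioi 0, S.indicator G s := fun G ↦ by
    rw [setLIntegral_indicator hS, inter_eq_left.mpr hS0]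
  rw [← lintegral_indicator hmeas, hrestrict,
    lintegral_eq_lintegral_circleMap (hDm.ennreal_ofReal.indicator hmeas)]
  refine setLIntegral_congr_fun measurableSet_Ioi fun s (hs : 0 < s) ↦ ?_
  have hnorm : ∀ θ, ‖circleMap 0 s θ‖ = s := fun θ ↦ by simp [abs_of_pos hs]
  by_cases hsS : s ∈ S
  · simp only [indicator, mem_preimage, hnorm, hsS, if_true]
    rw [lintegral_Ioo_ofReal_circleMap hD (hint s hsS), ← ENNReal.ofReal_mul hs.le]
    congr 1
    ring
  · simp [indicator, hnorm, hsS]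

theorem setLIntegral_norm_deriv_sq_eq_volume_image {g : ℂ → ℂ} {s : Set ℂ} (hs : MeasurableSet s)
    (hg : ∀ z ∈ s, DifferentiableAt ℂ g z) (hinj : InjOn g s) :
    ∫⁻ z in s, ENNReal.ofReal (‖deriv g z‖ ^ 2) = volume (g '' s) := by
  have hdet : ∀ z, |(fderiv ℂ g z |>.restrictScalars ℝ).det| = ‖deriv g z‖ ^ 2 := by
    intro z
    have hmul : fderiv ℂ g z = ContinuousLinearMap.toSpanSingleton ℂ (deriv g z) := by
      ext; simp
    rw [ContinuousLinearMap.det, ContinuousLinearMap.coe_restrictScalars,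
      LinearMap.det_restrictScalars, Algebra.norm_complex_eq, hmul]
    simp [Complex.normSq_eq_norm_sq]
  rw [← lintegral_abs_det_fderiv_eq_addHaar_image volume hs
    (fun z hz ↦ ((hg z hz).hasFDerivAt.restrictScalars ℝ).hasFDerivWithinAt) hinj]
  simp only [hdet]

theorem setLIntegral_two_pi_mul_inv_pow_four_add {ρ r c : ℝ} (hρ : 0 < ρ) (hρr : ρ ≤ r)
    (hc : 0 ≤ c) : ∫⁻ s in Ioo ρ r, ENNReal.ofReal (2 * π * s * ((s ^ 4)⁻¹ + c)) =
      ENNReal.ofReal (π * ((ρ ^ 2)⁻¹ - (r ^ 2)⁻¹ + c * (r ^ 2 - ρ ^ 2))) := by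
  have hpos : ∀ s ∈ uIcc ρ r, 0 < s := fun s hs ↦ hρ.trans_le (uIcc_of_le hρr ▸ hs).1
  have hderiv : ∀ s ∈ uIcc ρ r,
      HasDerivAt (fun s : ℝ ↦ π * (c * s ^ 2 - (s ^ 2)⁻¹)) (2 * π * s * ((s ^ 4)⁻¹ + c)) s := by
    intro s hs
    have hs0 := (hpos s hs).ne'
    refine ((((hasDerivAt_pow 2 s).const_mul c).sub
      ((hasDerivAt_pow 2 s).inv (pow_ne_zero 2 hs0))).const_mul π).congr_deriv ?_
    simp only [Nat.cast_ofNat]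
    field_simp
    ring
  have hint : IntervalIntegrable (fun s : ℝ ↦ 2 * π * s * ((s ^ 4)⁻¹ + c)) volume ρ r := by
    have hinv : ContinuousOn (fun s : ℝ ↦ (s ^ 4)⁻¹) (uIcc ρ r) :=
      (continuousOn_pow 4).inv₀ fun s hs ↦ pow_ne_zero 4 (hpos s hs).ne'
    exact ContinuousOn.intervalIntegrable (by fun_prop)
  have hnonneg : ∀ᵐ s ∂volume.restrict (Ioc ρ r), 0 ≤ 2 * π * s * ((s ^ 4)⁻¹ + c) :=
    ae_restrict_of_forall_mem measurableSet_Ioc fun s hs ↦ by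
      have := hρ.trans hs.1
      positivity
  rw [restrict_Ioo_eq_restrict_Ioc, ← ofReal_integral_eq_lintegral_ofReal hint.1 hnonneg,
    ← intervalIntegral.integral_of_le hρr,
    intervalIntegral.integral_eq_sub_of_hasDerivAt hderiv hint]
  ring_nf

theorem ofReal_le_volume_image_annulus {g h : ℂ → ℂ} {b : ℂ} {ρ r : ℝ} (hρ : 0 < ρ) (hρr : ρ < r)
    (hh : DifferentiableOn ℂ h (ball 0 r)) (hinj : InjOn g (norm ⁻¹' Ioo ρ r))
    (hg : ∀ z ∈ norm ⁻¹' Ioo ρ r, HasDerivAt g (-(z ^ 2)⁻¹ + b + z * h z) z) :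
    ENNReal.ofReal (π * ((ρ ^ 2)⁻¹ - (r ^ 2)⁻¹ + ‖b‖ ^ 2 * (r ^ 2 - ρ ^ 2))) ≤
      volume (g '' (norm ⁻¹' Ioo ρ r)) := by
  have hpos : ∀ s ∈ Ioo ρ r, 0 < s := fun s hs ↦ hρ.trans hs.1
  have hsphere : ∀ s ∈ Ioo ρ r, sphere (0 : ℂ) |s| ⊆ norm ⁻¹' Ioo ρ r := fun s hs z hz ↦ by
    rwa [mem_preimage, mem_sphere_zero_iff_norm.mp hz, abs_of_pos (hpos s hs)]
  have hderiv : ∀ s ∈ Ioo ρ r, EqOn (fun z ↦ ‖deriv g z‖ ^ 2)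
      (fun z ↦ ‖-(z ^ 2)⁻¹ + b + z * h z‖ ^ 2) (sphere 0 |s|) := fun s hs z hz ↦ by
    simp only [(hg z (hsphere s hs hz)).deriv]
  have hball : ∀ s ∈ Ioo ρ r, closedBall (0 : ℂ) |s| ⊆ ball 0 r := fun s hs ↦
    closedBall_subset_ball (by simpa [abs_of_pos (hpos s hs)] using hs.2)
  have hint : ∀ s ∈ Ioo ρ r, CircleIntegrable (fun z ↦ ‖deriv g z‖ ^ 2) 0 s := by
    intro s hs
    refine ContinuousOn.circleIntegrable' (ContinuousOn.congr ?_ (hderiv s hs))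
    have hhs : ContinuousOn h (sphere 0 |s|) :=
      hh.continuousOn.mono (sphere_subset_closedBall.trans (hball s hs))
    have hinv : ContinuousOn (fun z : ℂ ↦ (z ^ 2)⁻¹) (sphere 0 |s|) :=
      (continuousOn_pow 2).inv₀ fun z hz ↦
        pow_ne_zero 2 (ne_of_mem_sphere hz (abs_ne_zero.mpr (hpos s hs).ne'))
    fun_prop
  have hmeas : MeasurableSet (norm ⁻¹' Ioo ρ r : Set ℂ) := measurable_norm measurableSet_Ioo
  rw [← setLIntegral_two_pi_mul_inv_pow_four_add hρ hρr.le (sq_nonneg _),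
    ← setLIntegral_norm_deriv_sq_eq_volume_image hmeas (fun z hz ↦ (hg z hz).differentiableAt) hinj,
    setLIntegral_preimage_norm measurableSet_Ioo hpos ((measurable_deriv g).norm.pow_const 2)
      (fun z ↦ sq_nonneg _) hint]
  refine setLIntegral_mono' measurableSet_Ioo fun s hs ↦ ENNReal.ofReal_le_ofReal ?_
  have hs0 := hpos s hs
  rw [Real.circleAverage_congr_sphere (hderiv s hs)]
  gcongr
  exact inv_pow_four_add_le_circleAverage hs0.ne' (hh.mono (hball s hs)) b

/-- The real-linear map `w ↦ w - c * conj w`. For `c = b * ρ ^ 2` it carries the image of the circle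
`‖z‖ = ρ` under `z ↦ z⁻¹ + b * z` close to the circle of radius `ρ⁻¹`. -/
def subMulConj (c : ℂ) : ℂ →ₗ[ℝ] ℂ :=
  LinearMap.id - LinearMap.mulLeft ℝ c ∘ₗ Complex.conjAe.toLinearMap

theorem subMulConj_apply (c w : ℂ) : subMulConj c w = w - c * conj w := rfl

theorem det_subMulConj (c : ℂ) : LinearMap.det (subMulConj c) = 1 - ‖c‖ ^ 2 := by
  rw [← LinearMap.det_toMatrix Complex.basisOneI, Matrix.det_fin_two, ← Complex.normSq_eq_norm_sq,
    Complex.normSq_apply]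
  simp only [LinearMap.toMatrix_apply, subMulConj_apply, Complex.coe_basisOneI,
    Complex.coe_basisOneI_repr, Matrix.cons_val_zero, Matrix.cons_val_one, Matrix.cons_val_fin_one,
    map_one, Complex.conj_I, Complex.sub_re, Complex.sub_im, Complex.mul_re, Complex.mul_im,
    Complex.neg_re, Complex.neg_im, Complex.one_re, Complex.one_im, Complex.I_re, Complex.I_im]
  ring

theorem ofReal_one_sub_norm_sq_mul_volume_le {c : ℂ} {R : ℝ} {s : Set ℂ} (hR : 0 ≤ R)
    (hs : MapsTo (subMulConj c) s (closedBall 0 R)) :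
    ENNReal.ofReal (1 - ‖c‖ ^ 2) * volume s ≤ ENNReal.ofReal (π * R ^ 2) := by
  calc ENNReal.ofReal (1 - ‖c‖ ^ 2) * volume s
      ≤ ENNReal.ofReal |1 - ‖c‖ ^ 2| * volume s := by gcongr; exact le_abs_self _
    _ = volume (subMulConj c '' s) := by rw [Measure.addHaar_image_linearMap, det_subMulConj]
    _ ≤ volume (closedBall (0 : ℂ) R) := measure_mono hs.image_subset
    _ = ENNReal.ofReal (π * R ^ 2) := by
      rw [Complex.volume_closedBall, mul_comm π, ENNReal.ofReal_mul (sq_nonneg R),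
        ENNReal.ofReal_pow hR, ← NNReal.coe_real_pi, ENNReal.ofReal_coe_nnreal]

theorem norm_subMulConj_le {b k z : ℂ} {M ρ : ℝ} (hρ : 0 < ρ) (hρ1 : ρ ≤ 1) (hz : ‖z‖ = ρ)
    (hk : ‖k‖ ≤ M) : ‖subMulConj (b * ρ ^ 2) (z⁻¹ + b * z + z ^ 2 * k)‖ ≤
      ρ⁻¹ + (‖b‖ ^ 2 + (1 + ‖b‖) * M) * ρ ^ 2 := by
  have hz0 : z ≠ 0 := norm_ne_zero_iff.mp (hz ▸ hρ.ne')
  have hconj : conj z ≠ 0 := (map_ne_zero _).mpr hz0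
  have hρz : (ρ : ℂ) ^ 2 = z * conj z := by
    rw [Complex.mul_conj, Complex.normSq_eq_norm_sq, hz, Complex.ofReal_pow]
  -- the two terms of order `ρ` cancel: `b * z = b * ρ ^ 2 * conj z⁻¹`
  have hcancel : subMulConj (b * ρ ^ 2) (z⁻¹ + b * z + z ^ 2 * k) =
      z⁻¹ - b * conj b * (ρ ^ 2 * conj z) + (z ^ 2 * k - b * ρ ^ 2 * conj (z ^ 2 * k)) := by
    rw [subMulConj_apply, hρz]
    simp only [map_add, map_mul, map_inv₀]
    field_simp
    ring
  have hρ2 : ρ ^ 2 ≤ 1 := pow_le_one₀ hρ.le hρ1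
  have hmain : ‖z⁻¹ - b * conj b * (ρ ^ 2 * conj z)‖ ≤ ρ⁻¹ + ‖b‖ ^ 2 * ρ ^ 2 := by
    calc _ ≤ ‖z⁻¹‖ + ‖b * conj b * (ρ ^ 2 * conj z)‖ := norm_sub_le _ _
      _ = ρ⁻¹ + ‖b‖ ^ 2 * (ρ ^ 2 * ρ) := by
        simp only [norm_inv, norm_mul, norm_pow, RCLike.norm_conj, hz, Complex.norm_of_nonneg hρ.le]
        ring
      _ ≤ ρ⁻¹ + ‖b‖ ^ 2 * ρ ^ 2 := by
        gcongr
        exact mul_le_of_le_one_right (sq_nonneg ρ) hρ1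
  have hrest : ‖z ^ 2 * k - b * ρ ^ 2 * conj (z ^ 2 * k)‖ ≤ (1 + ‖b‖) * M * ρ ^ 2 := by
    calc _ ≤ ‖z ^ 2 * k‖ + ‖b * ρ ^ 2 * conj (z ^ 2 * k)‖ := norm_sub_le _ _
      _ = (1 + ‖b‖ * ρ ^ 2) * ‖k‖ * ρ ^ 2 := by
        simp only [norm_mul, norm_pow, RCLike.norm_conj, hz, Complex.norm_of_nonneg hρ.le]
        ring
      _ ≤ (1 + ‖b‖) * M * ρ ^ 2 := by
        gcongr
        exact mul_le_of_le_one_right (norm_nonneg b) hρ2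
  rw [hcancel]
  linarith [norm_add_le_of_le hmain hrest]

theorem norm_map_inv_le_of_forall_mem_sphere {E : Type*} [NormedAddCommGroup E] [NormedSpace ℝ E]
    {f : ℂ → ℂ} {ρ r R : ℝ} (hf : DifferentiableOn ℂ f (ball 0 r)) (hinj : InjOn f (ball 0 r))
    (hf0 : f 0 = 0) (hρ : 0 < ρ) (L : ℂ →ₗ[ℝ] E)
    (hL : ∀ z ∈ sphere (0 : ℂ) ρ, ‖L (f z)⁻¹‖ ≤ R) {z : ℂ} (hz : ‖z‖ ∈ Ioo ρ r) :
    ‖L (f z)⁻¹‖ ≤ R := by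
  by_contra! hlt
  have hρr : ρ < r := hz.1.trans hz.2
  have h0r : (0 : ℂ) ∈ ball 0 r := mem_ball_self (hρ.trans hρr)
  have hzr : z ∈ ball 0 r := mem_ball_zero_iff.mpr hz.2
  have hdisj : Disjoint (segment ℝ 0 (f z)) (f '' sphere 0 ρ) := by
    rw [disjoint_left, segment_eq_image]
    rintro _ ⟨t, ht, rfl⟩ ⟨y, hy, hyt⟩
    have hyr : y ∈ ball 0 r := sphere_subset_closedBall.trans (closedBall_subset_ball hρr) hy
    simp only [smul_zero, zero_add] at hyt
    have hfy : f y ≠ 0 := fun h ↦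
      ne_of_mem_sphere hy hρ.ne' (hinj hyr h0r (h.trans hf0.symm))
    have ht0 : t ≠ 0 := fun h ↦ hfy (by rw [hyt, h, zero_smul])
    have hzy : (f z)⁻¹ = t • (f y)⁻¹ := by rw [hyt, smul_inv₀, smul_inv_smul₀ ht0]
    refine hlt.not_ge ?_
    calc ‖L (f z)⁻¹‖ = t * ‖L (f y)⁻¹‖ := by
          rw [hzy, map_smul, norm_smul, Real.norm_of_nonneg ht.1]
      _ ≤ ‖L (f y)⁻¹‖ := mul_le_of_le_one_left (norm_nonneg _) ht.2
      _ ≤ R := hL y hy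
  obtain ⟨y, hy, hyz⟩ := subset_image_ball_of_disjoint_image_sphere hf hinj hρ hρr
    (convex_segment 0 (f z)).isPreconnected (by rw [hf0]; exact left_mem_segment ℝ 0 (f z)) hdisj
    (right_mem_segment ℝ 0 (f z))
  obtain rfl := hinj (ball_subset_ball hρr.le hy) hzr hyz
  exact (mem_ball_zero_iff.mp hy).not_gt hz.1

section AreaTheorem

variable {f K : ℂ → ℂ} {b : ℂ}

theorem hasDerivAt_inv_of_inv_eq (hK : DifferentiableOn ℂ K (ball 0 1))
    (hfK : ∀ z ∈ ball (0 : ℂ) 1, z ≠ 0 → (f z)⁻¹ = z⁻¹ + b * z + z ^ 2 * K z) {z : ℂ}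
    (hz : z ∈ ball (0 : ℂ) 1) (hz0 : z ≠ 0) :
    HasDerivAt (fun z ↦ (f z)⁻¹) (-(z ^ 2)⁻¹ + b + z * (2 * K z + z * deriv K z)) z := by
  have hKz := (hK.differentiableAt (isOpen_ball.mem_nhds hz)).hasDerivAt
  have heq : (fun z ↦ (f z)⁻¹) =ᶠ[𝓝 z] fun z ↦ z⁻¹ + b * z + z ^ 2 * K z := by
    filter_upwards [isOpen_ball.mem_nhds hz, isOpen_ne.mem_nhds hz0] using hfK
  refine ((((hasDerivAt_inv hz0).add ((hasDerivAt_id z).const_mul b)).add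
    ((hasDerivAt_pow 2 z).mul hKz)).congr_deriv ?_).congr_of_eventuallyEq heq
  simp only [Nat.cast_ofNat]
  ring

theorem one_sub_mul_le_of_inv_eq {M ρ : ℝ} (hf : DifferentiableOn ℂ f (ball 0 1))
    (hinj : InjOn f (ball 0 1)) (hf0 : f 0 = 0) (hK : DifferentiableOn ℂ K (ball 0 1))
    (hfK : ∀ z ∈ ball (0 : ℂ) 1, z ≠ 0 → (f z)⁻¹ = z⁻¹ + b * z + z ^ 2 * K z)
    (hρ : 0 < ρ) (hρ1 : ρ < 1) (hM : ∀ z ∈ sphere (0 : ℂ) ρ, ‖K z‖ ≤ M) :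
    (1 - ‖b‖ ^ 2 * ρ ^ 4) * ((ρ ^ 2)⁻¹ - 1 + ‖b‖ ^ 2 * (1 - ρ ^ 2)) ≤
      (ρ⁻¹ + (‖b‖ ^ 2 + (1 + ‖b‖) * M) * ρ ^ 2) ^ 2 := by
  set R := ρ⁻¹ + (‖b‖ ^ 2 + (1 + ‖b‖) * M) * ρ ^ 2
  set V := volume ((fun z ↦ (f z)⁻¹) '' (norm ⁻¹' Ioo ρ 1))
  set A := (ρ ^ 2)⁻¹ - 1 + ‖b‖ ^ 2 * (1 - ρ ^ 2)
  have hannulus : norm ⁻¹' Ioo ρ 1 ⊆ ball (0 : ℂ) 1 := fun z hz ↦ mem_ball_zero_iff.mpr hz.2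
  have hcircle : ∀ z ∈ sphere (0 : ℂ) ρ, ‖subMulConj (b * ρ ^ 2) (f z)⁻¹‖ ≤ R := by
    intro z hz
    rw [hfK z (sphere_subset_closedBall.trans (closedBall_subset_ball hρ1) hz)
      (ne_of_mem_sphere hz hρ.ne')]
    exact norm_subMulConj_le hρ hρ1.le (mem_sphere_zero_iff_norm.mp hz) (hM z hz)
  have hupper : ENNReal.ofReal (1 - ‖b‖ ^ 2 * ρ ^ 4) * V ≤ ENNReal.ofReal (π * R ^ 2) := by
    have hc : ‖b * (ρ : ℂ) ^ 2‖ ^ 2 = ‖b‖ ^ 2 * ρ ^ 4 := by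
      rw [norm_mul, norm_pow, Complex.norm_of_nonneg hρ.le]
      ring
    rw [← hc]
    refine ofReal_one_sub_norm_sq_mul_volume_le ((norm_nonneg _).trans (hcircle ρ ?_)) ?_
    · simp [hρ.le]
    · rintro _ ⟨z, hz, rfl⟩
      exact mem_closedBall_zero_iff.mpr
        (norm_map_inv_le_of_forall_mem_sphere hf hinj hf0 hρ _ hcircle hz)
  have hlower : ENNReal.ofReal (π * A) ≤ V := by
    have hK' := hK.deriv isOpen_ball
    have harea := ofReal_le_volume_image_annulus (b := b) hρ hρ1
      (by fun_prop : DifferentiableOn ℂ (fun z ↦ 2 * K z + z * deriv K z) (ball 0 1))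
      (inv_injective.comp_injOn (hinj.mono hannulus)) fun z hz ↦ hasDerivAt_inv_of_inv_eq hK hfK
        (hannulus hz) (norm_ne_zero_iff.mp (hρ.trans hz.1).ne')
    rwa [one_pow, inv_one] at harea
  have hρ2 : ρ ^ 2 ≤ 1 := pow_le_one₀ hρ.le hρ1.le
  have hA : 0 ≤ A := add_nonneg (sub_nonneg.mpr ((one_le_inv₀ (by positivity)).mpr hρ2))
    (mul_nonneg (sq_nonneg _) (sub_nonneg.mpr hρ2))
  have hle : (1 - ‖b‖ ^ 2 * ρ ^ 4) * (π * A) ≤ π * R ^ 2 := by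
    rw [← ENNReal.ofReal_le_ofReal_iff (by positivity), ENNReal.ofReal_mul' (by positivity)]
    exact (mul_le_mul_right hlower _).trans hupper
  rw [mul_left_comm] at hle
  exact le_of_mul_le_mul_left hle Real.pi_pos

theorem norm_le_one_of_inv_eq (hf : DifferentiableOn ℂ f (ball 0 1))
    (hinj : InjOn f (ball 0 1)) (hf0 : f 0 = 0) (hK : DifferentiableOn ℂ K (ball 0 1))
    (hfK : ∀ z ∈ ball (0 : ℂ) 1, z ≠ 0 → (f z)⁻¹ = z⁻¹ + b * z + z ^ 2 * K z) : ‖b‖ ≤ 1 := by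
  obtain ⟨M, hM⟩ := (isCompact_closedBall (0 : ℂ) (1 / 2)).exists_bound_of_continuousOn
    (hK.continuousOn.mono (closedBall_subset_ball (by norm_num)))
  set C := ‖b‖ ^ 2 + (1 + ‖b‖) * M
  set E : ℝ → ℝ := fun ρ ↦ 2 * C * ρ + C ^ 2 * ρ ^ 4 + 2 * ‖b‖ ^ 2 * ρ ^ 2 - ‖b‖ ^ 2 * ρ ^ 4
    + ‖b‖ ^ 4 * ρ ^ 4 * (1 - ρ ^ 2)
  have hE : Tendsto E (𝓝[>] 0) (𝓝 0) :=
    (Continuous.tendsto' (by fun_prop) 0 0 (by simp [E])).mono_left nhdsWithin_le_nhds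
  have hle : ∀ᶠ ρ in 𝓝[>] 0, ‖b‖ ^ 2 - 1 ≤ E ρ := by
    filter_upwards [Ioo_mem_nhdsGT (by norm_num : (0 : ℝ) < 1 / 2)] with ρ hρ
    have hρ0 : ρ ≠ 0 := hρ.1.ne'
    have harea := one_sub_mul_le_of_inv_eq hf hinj hf0 hK hfK hρ.1 (by linarith [hρ.2])
      fun z hz ↦ hM z (sphere_subset_closedBall.trans (closedBall_subset_closedBall hρ.2.le) hz)
    have hexpand : E ρ - (‖b‖ ^ 2 - 1) = (ρ⁻¹ + C * ρ ^ 2) ^ 2 -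
        (1 - ‖b‖ ^ 2 * ρ ^ 4) * ((ρ ^ 2)⁻¹ - 1 + ‖b‖ ^ 2 * (1 - ρ ^ 2)) := by
      simp only [E]
      field_simp
      ring
    linarith
  have hb : ‖b‖ ^ 2 - 1 ≤ 0 := ge_of_tendsto hE hle
  exact (sq_le_one_iff₀ (norm_nonneg b)).mp (by linarith)

end AreaTheorem

theorem exists_eq_mul_exp {p : ℂ → ℂ} {c : ℂ} {r : ℝ} (hp : DifferentiableOn ℂ p (ball c r))
    (hp0 : ∀ z ∈ ball c r, p z ≠ 0) : ∃ l : ℂ → ℂ, DifferentiableOn ℂ l (ball c r) ∧ l c = 0 ∧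
      ∀ z ∈ ball c r, p z = p c * Complex.exp (l z) := by
  have hlog : DifferentiableOn ℂ (fun z ↦ deriv p z / p z) (ball c r) :=
    (hp.deriv isOpen_ball).div hp hp0
  obtain ⟨l, hl⟩ := hlog.isConservativeOn.isExactOn_ball hlog.continuousOn
  have hquot : ∀ z ∈ ball c r, HasDerivAt (fun z ↦ p z * Complex.exp (-(l z - l c))) 0 z := by
    intro z hz
    have hpz := (hp.differentiableAt (isOpen_ball.mem_nhds hz)).hasDerivAt
    refine (hpz.mul ((hl z hz).sub_const (l c)).neg.cexp).congr_deriv ?_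
    field_simp [hp0 z hz]
    ring
  refine ⟨fun z ↦ l z - l c, fun z hz ↦
    ((hl z hz).sub_const (l c)).differentiableAt.differentiableWithinAt, sub_self _, fun z hz ↦ ?_⟩
  have hconst := isOpen_ball.is_const_of_deriv_eq_zero (convex_ball c r).isPreconnected
    (fun z hz ↦ (hquot z hz).differentiableAt.differentiableWithinAt)
    (fun z hz ↦ (hquot z hz).deriv) hz (mem_ball_self (pos_of_mem_ball hz))
  simp only [sub_self, neg_zero, Complex.exp_zero, mul_one] at hconst
  rw [← hconst, mul_assoc, ← Complex.exp_add, neg_add_cancel, Complex.exp_zero, mul_one]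

theorem apply_eq_add_mul_dslope (h : ℂ → ℂ) (z : ℂ) : h z = h 0 + z * dslope h 0 z := by
  have := sub_smul_dslope h 0 z
  rw [sub_zero, smul_eq_mul] at this
  rw [this]
  ring

theorem deriv_deriv_id_mul_zero {p : ℂ → ℂ} (hp : AnalyticAt ℂ p 0) :
    deriv (deriv fun z ↦ z * p z) 0 = 2 * deriv p 0 := by
  have hmul : ∀ {q : ℂ → ℂ} {z : ℂ}, DifferentiableAt ℂ q z →
      deriv (fun z ↦ z * q z) z = q z + z * deriv q z := fun hq ↦ by
    rw [deriv_fun_mul differentiableAt_fun_id hq, deriv_id'', one_mul]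
  have hderiv : deriv (fun z ↦ z * p z) =ᶠ[𝓝 0] fun z ↦ p z + z * deriv p z := by
    filter_upwards [hp.eventually_analyticAt] with z hz using hmul hz.differentiableAt
  have hp' := hp.deriv.differentiableAt
  rw [hderiv.deriv_eq, deriv_fun_add hp.differentiableAt (by fun_prop), hmul hp']
  ring

/-- Schlicht functions: the class `S` of univalent functions on the unit disc, normalised by
`f 0 = 0` and `f' 0 = 1`. -/
structure IsSchlicht (f : ℂ → ℂ) : Prop where
  differentiableOn : DifferentiableOn ℂ f (ball 0 1)
  injOn : InjOn f (ball 0 1)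
  map_zero : f 0 = 0
  deriv_zero : deriv f 0 = 1

theorem mapsTo_sq_ball : MapsTo (fun z : ℂ ↦ z ^ 2) (ball 0 1) (ball 0 1) := fun z hz ↦ by
  rw [mem_ball_zero_iff] at hz ⊢
  simpa only [norm_pow] using pow_lt_one₀ (norm_nonneg z) hz two_ne_zero

theorem injOn_mul_exp_half_sq {f l : ℂ → ℂ} (hf : InjOn f (ball 0 1))
    (hfl : ∀ z ∈ ball (0 : ℂ) 1, f z = z * Complex.exp (l z)) :
    InjOn (fun z ↦ z * Complex.exp (l (z ^ 2) / 2)) (ball 0 1) := by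
  intro x hx y hy hxy
  simp only at hxy
  have hfsq : ∀ z ∈ ball (0 : ℂ) 1, f (z ^ 2) = (z * Complex.exp (l (z ^ 2) / 2)) ^ 2 := by
    intro z hz
    rw [hfl _ (mapsTo_sq_ball hz), mul_pow, ← Complex.exp_nat_mul]
    congr 2
    push_cast
    ring
  have hxy2 : x ^ 2 = y ^ 2 :=
    hf (mapsTo_sq_ball hx) (mapsTo_sq_ball hy) (by rw [hfsq x hx, hfsq y hy, hxy])
  rw [hxy2] at hxy
  exact mul_right_cancel₀ (Complex.exp_ne_zero _) hxy

namespace IsSchlicht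

variable {f : ℂ → ℂ}

theorem exists_eq_mul_exp (hf : IsSchlicht f) : ∃ l : ℂ → ℂ, DifferentiableOn ℂ l (ball 0 1) ∧
    l 0 = 0 ∧ ∀ z ∈ ball (0 : ℂ) 1, f z = z * Complex.exp (l z) := by
  have h0 : (0 : ℂ) ∈ ball (0 : ℂ) 1 := mem_ball_self one_pos
  have hfz : ∀ z, f z = z * dslope f 0 z := fun z ↦ by
    rw [apply_eq_add_mul_dslope f z, hf.map_zero, zero_add]
  have hp0 : ∀ z ∈ ball (0 : ℂ) 1, dslope f 0 z ≠ 0 := by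
    intro z hz hpz
    obtain rfl : z = 0 := hf.injOn hz h0 (by rw [hfz, hpz, mul_zero, hf.map_zero])
    simp [hf.deriv_zero] at hpz
  obtain ⟨l, hl, hl0, hexp⟩ := _root_.exists_eq_mul_exp
    ((Complex.differentiableOn_dslope (ball_mem_nhds 0 one_pos)).mpr hf.differentiableOn) hp0
  refine ⟨l, hl, hl0, fun z hz ↦ ?_⟩
  rw [hfz, hexp z hz, dslope_same, hf.deriv_zero, one_mul]

theorem norm_deriv_le_two_of_eq_mul_exp (hf : IsSchlicht f) {l : ℂ → ℂ}
    (hl : DifferentiableOn ℂ l (ball 0 1)) (hl0 : l 0 = 0)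
    (hfl : ∀ z ∈ ball (0 : ℂ) 1, f z = z * Complex.exp (l z)) : ‖deriv l 0‖ ≤ 2 := by
  have hnhds : ball (0 : ℂ) 1 ∈ 𝓝 0 := ball_mem_nhds 0 one_pos
  set q : ℂ → ℂ := fun w ↦ Complex.exp (-l w / 2)
  set n : ℂ → ℂ := dslope (dslope q 0) 0
  have hn : DifferentiableOn ℂ n (ball 0 1) := by
    have hq : DifferentiableOn ℂ q (ball 0 1) := by fun_prop
    simpa only [n, Complex.differentiableOn_dslope hnhds] using hq
  have hq0 : q 0 = 1 := by simp only [q, hl0, neg_zero, zero_div, Complex.exp_zero]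
  have hq' : dslope q 0 0 = -deriv l 0 / 2 := by
    have hexp : HasDerivAt q (q 0 * (-deriv l 0 / 2)) 0 :=
      ((hl.differentiableAt hnhds).hasDerivAt.neg.div_const 2).cexp
    rw [dslope_same, hexp.deriv, hq0, one_mul]
  have hqn : ∀ w, q w = 1 + w * (-deriv l 0 / 2 + w * n w) := fun w ↦ by
    rw [apply_eq_add_mul_dslope q, apply_eq_add_mul_dslope (dslope q 0), hq0, hq']
  have hb : ‖-deriv l 0 / 2‖ ≤ 1 := by
    -- The odd square root `√(f (z ^ 2))` is univalent, and its reciprocal is `z⁻¹ * q (z ^ 2)`.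
    refine norm_le_one_of_inv_eq (f := fun z ↦ z * Complex.exp (l (z ^ 2) / 2))
      (K := fun z ↦ z * n (z ^ 2)) ?_ (injOn_mul_exp_half_sq hf.injOn hfl) (zero_mul _) ?_ ?_
    · exact differentiableOn_id.mul
        ((hl.comp (differentiableOn_pow 2) mapsTo_sq_ball).div_const 2).cexp
    · exact differentiableOn_id.mul (hn.comp (differentiableOn_pow 2) mapsTo_sq_ball)
    · intro z _ hz0
      have hinv : (z * Complex.exp (l (z ^ 2) / 2))⁻¹ = z⁻¹ * q (z ^ 2) := by
        rw [mul_inv, ← Complex.exp_neg, ← neg_div]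
      rw [hinv, hqn]
      field_simp
      ring
  rw [norm_div, norm_neg, Complex.norm_two] at hb
  linarith

theorem norm_deriv_deriv_zero_le (hf : IsSchlicht f) : ‖deriv (deriv f) 0‖ ≤ 4 := by
  obtain ⟨l, hl, hl0, hfl⟩ := hf.exists_eq_mul_exp
  have hnhds : ball (0 : ℂ) 1 ∈ 𝓝 0 := ball_mem_nhds 0 one_pos
  have hf'' : deriv (deriv f) 0 = 2 * deriv l 0 := by
    have hfexp : f =ᶠ[𝓝 0] fun z ↦ z * Complex.exp (l z) := by
      filter_upwards [hnhds] using hfl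
    have hla := hl.analyticAt hnhds
    rw [hfexp.deriv.deriv_eq, deriv_deriv_id_mul_zero hla.cexp', deriv_cexp hla.differentiableAt,
      hl0, Complex.exp_zero, one_mul]
  rw [hf'', norm_mul, Complex.norm_two]
  linarith [hf.norm_deriv_le_two_of_eq_mul_exp hl hl0 hfl]

end IsSchlicht

section Koebe

variable {f : ℂ → ℂ} {a z : ℂ}

theorem isSchlicht_sub_div_deriv (hf : DifferentiableOn ℂ f (ball 0 1))
    (hinj : InjOn f (ball 0 1)) : IsSchlicht fun z ↦ (f z - f 0) / deriv f 0 := by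
  have hd : deriv f 0 ≠ 0 := deriv_ne_zero_of_injOn isOpen_ball hf hinj (mem_ball_self one_pos)
  refine ⟨(hf.sub_const _).div_const _, fun x hx y hy hxy ↦ ?_, by simp, by simp [hd]⟩
  exact hinj hx hy (sub_left_injective ((div_left_inj' hd).mp hxy))

theorem norm_deriv_deriv_zero_le_of_injOn (hf : DifferentiableOn ℂ f (ball 0 1))
    (hinj : InjOn f (ball 0 1)) : ‖deriv (deriv f) 0‖ ≤ 4 * ‖deriv f 0‖ := by
  have hd : deriv f 0 ≠ 0 := deriv_ne_zero_of_injOn isOpen_ball hf hinj (mem_ball_self one_pos)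
  have hle := (isSchlicht_sub_div_deriv hf hinj).norm_deriv_deriv_zero_le
  have hderiv : deriv (fun z ↦ (f z - f 0) / deriv f 0) = fun z ↦ deriv f z / deriv f 0 := by
    ext
    simp
  rwa [hderiv, deriv_div_const, norm_div, div_le_iff₀ (norm_pos_iff.mpr hd)] at hle

/-- The disc automorphism carrying `0` to `a`, used to move the base point of a univalent
function on the unit disc. -/
def discShift (a z : ℂ) : ℂ := (z + a) / (1 + conj a * z)

theorem one_sub_norm_sq_ne_zero (ha : ‖a‖ < 1) : (1 - ‖a‖ ^ 2 : ℂ) ≠ 0 := by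
  exact_mod_cast (sub_pos.mpr (pow_lt_one₀ (norm_nonneg a) ha two_ne_zero)).ne'

theorem one_add_conj_mul_ne_zero (ha : ‖a‖ < 1) (hz : ‖z‖ < 1) : 1 + conj a * z ≠ 0 := by
  intro h
  have hnorm : ‖conj a * z‖ < 1 := by
    rw [norm_mul, RCLike.norm_conj]
    exact mul_lt_one_of_nonneg_of_lt_one_left (norm_nonneg a) ha hz.le
  rw [eq_neg_of_add_eq_zero_right h, norm_neg, norm_one] at hnorm
  exact hnorm.false

theorem norm_discShift_lt_one (ha : ‖a‖ < 1) (hz : ‖z‖ < 1) : ‖discShift a z‖ < 1 := by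
  rw [discShift, norm_div, div_lt_one (norm_pos_iff.mpr (one_add_conj_mul_ne_zero ha hz))]
  refine lt_of_pow_lt_pow_left₀ 2 (norm_nonneg _) (sub_pos.mp ?_)
  have hid : ‖1 + conj a * z‖ ^ 2 - ‖z + a‖ ^ 2 = (1 - ‖a‖ ^ 2) * (1 - ‖z‖ ^ 2) := by
    simp only [Complex.sq_norm, Complex.normSq_apply, Complex.add_re, Complex.add_im,
      Complex.mul_re, Complex.mul_im, Complex.conj_re, Complex.conj_im, Complex.one_re,
      Complex.one_im]
    ring
  rw [hid]
  exact mul_pos (sub_pos.mpr (pow_lt_one₀ (norm_nonneg a) ha two_ne_zero))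
    (sub_pos.mpr (pow_lt_one₀ (norm_nonneg z) hz two_ne_zero))

theorem injOn_discShift (ha : ‖a‖ < 1) : InjOn (discShift a) (ball 0 1) := by
  intro x hx y hy hxy
  rw [mem_ball_zero_iff] at hx hy
  rw [discShift, discShift, div_eq_div_iff (one_add_conj_mul_ne_zero ha hx)
    (one_add_conj_mul_ne_zero ha hy)] at hxy
  have hprod : (1 - ‖a‖ ^ 2 : ℂ) * (x - y) = 0 := by
    rw [← Complex.mul_conj']
    linear_combination hxy
  exact sub_eq_zero.mp ((mul_eq_zero.mp hprod).resolve_left (one_sub_norm_sq_ne_zero ha))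

theorem hasDerivAt_discShift (ha : ‖a‖ < 1) (hz : ‖z‖ < 1) :
    HasDerivAt (discShift a) ((1 - ‖a‖ ^ 2) / (1 + conj a * z) ^ 2) z := by
  refine (((hasDerivAt_id z).add_const a).div (((hasDerivAt_id z).const_mul (conj a)).const_add 1)
    (one_add_conj_mul_ne_zero ha hz)).congr_deriv ?_
  rw [← Complex.mul_conj']
  simp only [id_eq]
  ring

theorem deriv_deriv_discShift_zero (ha : ‖a‖ < 1) :
    deriv (deriv (discShift a)) 0 = -2 * conj a * (1 - ‖a‖ ^ 2) := by
  have hderiv : deriv (discShift a) =ᶠ[𝓝 0] fun z ↦ (1 - ‖a‖ ^ 2) / (1 + conj a * z) ^ 2 := by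
    filter_upwards [ball_mem_nhds 0 one_pos] with z hz
    exact (hasDerivAt_discShift ha (mem_ball_zero_iff.mp hz)).deriv
  have hden : HasDerivAt (fun z ↦ 1 + conj a * z) (conj a * 1) 0 :=
    ((hasDerivAt_id 0).const_mul (conj a)).const_add 1
  have hquot := (hasDerivAt_const 0 (1 - ‖a‖ ^ 2 : ℂ)).div (hden.pow 2) (by simp)
  rw [hderiv.deriv_eq]
  refine hquot.deriv.trans ?_
  simp
  ring

theorem norm_one_sub_mul_deriv_deriv_sub_le (hf : DifferentiableOn ℂ f (ball 0 1))
    (hinj : InjOn f (ball 0 1)) (ha : ‖a‖ < 1) :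
    ‖(1 - ‖a‖ ^ 2) * deriv (deriv f) a - 2 * conj a * deriv f a‖ ≤ 4 * ‖deriv f a‖ := by
  have hmaps : MapsTo (discShift a) (ball 0 1) (ball 0 1) := fun z hz ↦ by
    rw [mem_ball_zero_iff] at hz ⊢
    exact norm_discShift_lt_one ha hz
  have hshift : DifferentiableOn ℂ (discShift a) (ball 0 1) := fun z hz ↦
    (hasDerivAt_discShift ha (mem_ball_zero_iff.mp hz)).differentiableAt.differentiableWithinAt
  have hshift0 : discShift a 0 = a := by simp [discShift]
  have hshift' : deriv (discShift a) 0 = 1 - ‖a‖ ^ 2 := by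
    simpa using (hasDerivAt_discShift ha (norm_zero.trans_lt one_pos)).deriv
  have hfa : AnalyticAt ℂ f (discShift a 0) := by
    rw [hshift0]
    exact hf.analyticAt (isOpen_ball.mem_nhds (mem_ball_zero_iff.mpr ha))
  have hshifta := hshift.analyticAt (ball_mem_nhds 0 one_pos)
  have hle := norm_deriv_deriv_zero_le_of_injOn (hf.comp hshift hmaps)
    (hinj.comp (injOn_discShift ha) hmaps)
  have hcomp := iteratedDeriv_comp_two hfa.contDiffAt hshifta.contDiffAt
  simp only [iteratedDeriv_succ, iteratedDeriv_zero] at hcomp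
  have hfactor : deriv (deriv f) a * (1 - ‖a‖ ^ 2 : ℂ) ^ 2 +
      deriv f a * (-2 * conj a * (1 - ‖a‖ ^ 2)) =
      (1 - ‖a‖ ^ 2) * ((1 - ‖a‖ ^ 2) * deriv (deriv f) a - 2 * conj a * deriv f a) := by
    ring
  rw [hcomp, deriv_comp 0 hfa.differentiableAt hshifta.differentiableAt,
    deriv_deriv_discShift_zero ha, hshift0, hshift', hfactor, norm_mul, norm_mul (deriv f a),
    mul_comm ‖deriv f a‖, mul_left_comm] at hle
  exact le_of_mul_le_mul_left hle (norm_pos_iff.mpr (one_sub_norm_sq_ne_zero ha))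

end Koebe

section Distortion

variable {f : ℂ → ℂ} {u z : ℂ} {r : ℝ}

theorem hasDerivAt_norm_of_ne_zero {γ : ℝ → ℂ} {γ' : ℂ} {t : ℝ} (hγ : HasDerivAt γ γ' t)
    (h0 : γ t ≠ 0) : HasDerivAt (fun s ↦ ‖γ s‖) (‖γ t‖ * (γ' / γ t).re) t := by
  have hnorm : ‖γ t‖ ≠ 0 := norm_ne_zero_iff.mpr h0
  have hsqrt := hγ.norm_sq.sqrt (pow_ne_zero 2 hnorm)
  simp only [Real.sqrt_sq (norm_nonneg _)] at hsqrt
  refine hsqrt.congr_deriv ?_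
  have hinner : inner ℝ (γ t) γ' = (γ' / γ t).re * ‖γ t‖ ^ 2 := by
    rw [← Complex.re_mul_ofReal, Complex.ofReal_pow, ← Complex.mul_conj', ← mul_assoc,
      div_mul_cancel₀ _ h0, Complex.inner]
  rw [hinner]
  field_simp

theorem hasDerivAt_comp_mul_ofReal (hf : DifferentiableAt ℂ f (u * r)) :
    HasDerivAt (fun s : ℝ ↦ f (u * s)) (deriv f (u * r) * u) r := by
  have hline : HasDerivAt (fun w : ℂ ↦ u * w) (u * 1) r := (hasDerivAt_id (r : ℂ)).const_mul u
  rw [mul_one] at hline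
  exact (hf.hasDerivAt.comp (r : ℂ) hline).comp_ofReal

theorem norm_mul_ofReal_of_norm_eq_one (hu : ‖u‖ = 1) (hr : 0 ≤ r) : ‖u * r‖ = r := by
  rw [norm_mul, hu, one_mul, Complex.norm_of_nonneg hr]

theorem abs_one_sub_sq_mul_re_sub_le (hf : DifferentiableOn ℂ f (ball 0 1))
    (hinj : InjOn f (ball 0 1)) (hu : ‖u‖ = 1) (hr0 : 0 ≤ r) (hr1 : r < 1) :
    |(1 - r ^ 2) * (deriv (deriv f) (u * r) * u / deriv f (u * r)).re - 2 * r| ≤ 4 := by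
  have hnorm := norm_mul_ofReal_of_norm_eq_one hu hr0
  have hd : deriv f (u * r) ≠ 0 := deriv_ne_zero_of_injOn isOpen_ball hf hinj
    (by rwa [mem_ball_zero_iff, hnorm])
  have hkoebe := norm_one_sub_mul_deriv_deriv_sub_le hf hinj (hnorm.trans_lt hr1)
  have huu : u * conj u = 1 := by rw [Complex.mul_conj', hu, Complex.ofReal_one, one_pow]
  have hrot : (1 - r ^ 2) * (deriv (deriv f) (u * r) * u / deriv f (u * r)) - 2 * r =
      u * ((1 - r ^ 2) * deriv (deriv f) (u * r) - 2 * conj (u * r) * deriv f (u * r)) /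
        deriv f (u * r) := by
    have hquot := div_mul_cancel₀ (deriv (deriv f) (u * r) * u) hd
    rw [map_mul, Complex.conj_ofReal, eq_div_iff hd]
    linear_combination (1 - r ^ 2) * hquot + 2 * r * deriv f (u * r) * huu
  have hre : ((1 - r ^ 2) * (deriv (deriv f) (u * r) * u / deriv f (u * r)) - 2 * r : ℂ).re =
      (1 - r ^ 2) * (deriv (deriv f) (u * r) * u / deriv f (u * r)).re - 2 * r := by
    rw [← Complex.re_ofReal_mul]
    simp
  rw [hnorm] at hkoebe
  rw [← hre]
  refine (Complex.abs_re_le_norm _).trans ?_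
  rwa [hrot, norm_div, norm_mul, hu, one_mul, div_le_iff₀ (norm_pos_iff.mpr hd)]

theorem hasDerivAt_log_one_add (hr : -1 < r) :
    HasDerivAt (fun s ↦ Real.log (1 + s)) (1 / (1 + r)) r :=
  ((hasDerivAt_id' r).const_add 1).log (by linarith)

theorem hasDerivAt_log_one_sub (hr : r < 1) :
    HasDerivAt (fun s ↦ Real.log (1 - s)) (-1 / (1 - r)) r :=
  ((hasDerivAt_id' r).const_sub 1).log (by linarith)

theorem hasDerivAt_log_norm_deriv_mul_ofReal (hf : DifferentiableOn ℂ f (ball 0 1))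
    (hinj : InjOn f (ball 0 1)) (hu : ‖u‖ = 1) (hr0 : 0 ≤ r) (hr1 : r < 1) :
    HasDerivAt (fun s : ℝ ↦ Real.log ‖deriv f (u * s)‖)
      (deriv (deriv f) (u * r) * u / deriv f (u * r)).re r := by
  have hur : u * r ∈ ball 0 1 := mem_ball_zero_iff.mpr
    ((norm_mul_ofReal_of_norm_eq_one hu hr0).trans_lt hr1)
  have hd : deriv f (u * r) ≠ 0 := deriv_ne_zero_of_injOn isOpen_ball hf hinj hur
  have hray := hasDerivAt_comp_mul_ofReal
    ((hf.deriv isOpen_ball).differentiableAt (isOpen_ball.mem_nhds hur))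
  have hlog := (hasDerivAt_norm_of_ne_zero hray hd).log (norm_ne_zero_iff.mpr hd)
  rwa [mul_div_cancel_left₀ _ (norm_ne_zero_iff.mpr hd)] at hlog

namespace IsSchlicht

-- Along a ray the derivative of `log ((1 - r ^ 2) * ‖f'‖)` is at most `4 / (1 - r ^ 2)` in size.
theorem abs_log_norm_deriv_add_le (hf : IsSchlicht f) (hu : ‖u‖ = 1) (hr0 : 0 ≤ r) (hr1 : r < 1) :
    |Real.log ‖deriv f (u * r)‖ + (Real.log (1 + r) + Real.log (1 - r))| ≤
      2 * (Real.log (1 + r) - Real.log (1 - r)) := by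
  set D : ℝ → ℝ := fun s ↦ (deriv (deriv f) (u * s) * u / deriv f (u * s)).re
  have hlhs : ∀ s ∈ Icc 0 r, HasDerivAt (fun s : ℝ ↦ Real.log ‖deriv f (u * s)‖ +
      (Real.log (1 + s) + Real.log (1 - s))) (D s + (1 / (1 + s) + -1 / (1 - s))) s := fun s hs ↦
    (hasDerivAt_log_norm_deriv_mul_ofReal hf.differentiableOn hf.injOn hu hs.1
      (hs.2.trans_lt hr1)).add ((hasDerivAt_log_one_add (by linarith [hs.1])).add
        (hasDerivAt_log_one_sub (by linarith [hs.2])))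
  have hrhs : ∀ s ∈ Icc 0 r, HasDerivAt (fun s : ℝ ↦ 2 * (Real.log (1 + s) - Real.log (1 - s)))
      (2 * (1 / (1 + s) - -1 / (1 - s))) s := fun s hs ↦
    ((hasDerivAt_log_one_add (by linarith [hs.1])).sub
      (hasDerivAt_log_one_sub (by linarith [hs.2]))).const_mul 2
  refine image_norm_le_of_norm_deriv_right_le_deriv_boundary'
    (fun s hs ↦ (hlhs s hs).continuousAt.continuousWithinAt)
    (fun s hs ↦ (hlhs s (Ico_subset_Icc_self hs)).hasDerivWithinAt) (by simp [hf.deriv_zero])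
    (fun s hs ↦ (hrhs s hs).continuousAt.continuousWithinAt)
    (fun s hs ↦ (hrhs s (Ico_subset_Icc_self hs)).hasDerivWithinAt) (fun s hs ↦ ?_)
    (right_mem_Icc.mpr hr0)
  have hs1 : s < 1 := hs.2.trans hr1
  have hpos : 0 < 1 - s ^ 2 := sub_pos.mpr (pow_lt_one₀ hs.1 hs1 two_ne_zero)
  have hadd : 1 + s ≠ 0 := by linarith [hs.1]
  have hsub : 1 - s ≠ 0 := by linarith
  have hbound := abs_one_sub_sq_mul_re_sub_le hf.differentiableOn hf.injOn hu hs.1 hs1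
  have hl : D s + (1 / (1 + s) + -1 / (1 - s)) = ((1 - s ^ 2) * D s - 2 * s) / (1 - s ^ 2) := by
    rw [show 1 - s ^ 2 = (1 + s) * (1 - s) by ring]
    field_simp
    ring
  have hr : 2 * (1 / (1 + s) - -1 / (1 - s)) = 4 / (1 - s ^ 2) := by
    rw [show 1 - s ^ 2 = (1 + s) * (1 - s) by ring]
    field_simp
    ring
  rw [hl, hr, Real.norm_eq_abs, abs_div, abs_of_pos hpos]
  exact div_le_div_of_nonneg_right hbound hpos.le

theorem abs_log_norm_deriv_add_norm_le (hf : IsSchlicht f) (hz : ‖z‖ < 1) :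
    |Real.log ‖deriv f z‖ + (Real.log (1 + ‖z‖) + Real.log (1 - ‖z‖))| ≤
      2 * (Real.log (1 + ‖z‖) - Real.log (1 - ‖z‖)) := by
  obtain ⟨u, hu, huz⟩ := Complex.exists_norm_mul_eq_self z
  simpa only [huz] using hf.abs_log_norm_deriv_add_le hu (norm_nonneg z) hz

theorem deriv_ne_zero (hf : IsSchlicht f) (hz : ‖z‖ < 1) : deriv f z ≠ 0 :=
  deriv_ne_zero_of_injOn isOpen_ball hf.differentiableOn hf.injOn (mem_ball_zero_iff.mpr hz)

theorem norm_deriv_le (hf : IsSchlicht f) (hz : ‖z‖ < 1) :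
    ‖deriv f z‖ ≤ (1 + ‖z‖) / (1 - ‖z‖) ^ 3 := by
  have hadd : 0 < 1 + ‖z‖ := by positivity
  have hsub : 0 < (1 - ‖z‖) ^ 3 := pow_pos (sub_pos.mpr hz) 3
  rw [← Real.log_le_log_iff (norm_pos_iff.mpr (hf.deriv_ne_zero hz)) (div_pos hadd hsub),
    Real.log_div hadd.ne' hsub.ne', Real.log_pow]
  push_cast
  linarith [(abs_le.mp (hf.abs_log_norm_deriv_add_norm_le hz)).2]

theorem le_norm_deriv (hf : IsSchlicht f) (hz : ‖z‖ < 1) :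
    (1 - ‖z‖) / (1 + ‖z‖) ^ 3 ≤ ‖deriv f z‖ := by
  have hadd : 0 < (1 + ‖z‖) ^ 3 := by positivity
  have hsub : 0 < 1 - ‖z‖ := sub_pos.mpr hz
  rw [← Real.log_le_log_iff (div_pos hsub hadd) (norm_pos_iff.mpr (hf.deriv_ne_zero hz)),
    Real.log_div hsub.ne' hadd.ne', Real.log_pow]
  push_cast
  linarith [(abs_le.mp (hf.abs_log_norm_deriv_add_norm_le hz)).1]

end IsSchlicht

end Distortion

section Growth

variable {f : ℂ → ℂ} {z : ℂ}

theorem hasDerivAt_div_one_sub_sq {s : ℝ} (hs : s ≠ 1) :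
    HasDerivAt (fun s : ℝ ↦ s / (1 - s) ^ 2) ((1 + s) / (1 - s) ^ 3) s := by
  have hsub : 1 - s ≠ 0 := sub_ne_zero.mpr hs.symm
  refine ((hasDerivAt_id' s).fun_div (((hasDerivAt_id' s).const_sub 1).fun_pow 2)
    (pow_ne_zero 2 hsub)).congr_deriv ?_
  field_simp
  ring

theorem hasDerivAt_div_one_add_sq {s : ℝ} (hs : s ≠ -1) :
    HasDerivAt (fun s : ℝ ↦ s / (1 + s) ^ 2) ((1 - s) / (1 + s) ^ 3) s := by
  have hneg := ((hasDerivAt_div_one_sub_sq (mt neg_eq_iff_eq_neg.mp hs)).comp s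
    (hasDerivAt_neg s)).fun_neg
  simpa [Function.comp_def, neg_div, ← sub_eq_add_neg] using hneg

theorem deriv_mul_eq_of_comp_eventuallyEq_mul {γ : ℝ → ℂ} {γ' w : ℂ} {t : ℝ}
    (hf : DifferentiableAt ℂ f (γ t)) (hγ : HasDerivAt γ γ' t)
    (hfγ : ∀ᶠ s : ℝ in 𝓝 t, f (γ s) = w * s) : deriv f (γ t) * γ' = w := by
  have hline : HasDerivAt (f ∘ γ) (w * 1) t :=
    (Complex.ofRealCLM.hasDerivAt.const_mul w).congr_of_eventuallyEq hfγ
  exact ((hf.hasDerivAt.comp_of_eq t hγ rfl).unique hline).trans (mul_one w)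

namespace IsSchlicht

theorem norm_le (hf : IsSchlicht f) (hz : ‖z‖ < 1) : ‖f z‖ ≤ ‖z‖ / (1 - ‖z‖) ^ 2 := by
  obtain ⟨u, hu, huz⟩ := Complex.exists_norm_mul_eq_self z
  have hlt : ∀ s ∈ Icc 0 ‖z‖, ‖u * s‖ < 1 := fun s hs ↦
    (norm_mul_ofReal_of_norm_eq_one hu hs.1).trans_lt (hs.2.trans_lt hz)
  have hray : ∀ s ∈ Icc 0 ‖z‖, HasDerivAt (fun s : ℝ ↦ f (u * s)) (deriv f (u * s) * u) s :=
    fun s hs ↦ hasDerivAt_comp_mul_ofReal (hf.differentiableOn.differentiableAt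
      (isOpen_ball.mem_nhds (mem_ball_zero_iff.mpr (hlt s hs))))
  have hbound : ∀ s ∈ Icc 0 ‖z‖,
      HasDerivAt (fun s : ℝ ↦ s / (1 - s) ^ 2) ((1 + s) / (1 - s) ^ 3) s :=
    fun s hs ↦ hasDerivAt_div_one_sub_sq (hs.2.trans_lt hz).ne
  have hle := image_norm_le_of_norm_deriv_right_le_deriv_boundary'
    (fun s hs ↦ (hray s hs).continuousAt.continuousWithinAt)
    (fun s hs ↦ (hray s (Ico_subset_Icc_self hs)).hasDerivWithinAt) (by simp [hf.map_zero])
    (fun s hs ↦ (hbound s hs).continuousAt.continuousWithinAt)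
    (fun s hs ↦ (hbound s (Ico_subset_Icc_self hs)).hasDerivWithinAt)
    (fun s hs ↦ by
      have := hf.norm_deriv_le (hlt s (Ico_subset_Icc_self hs))
      rw [norm_mul_ofReal_of_norm_eq_one hu hs.1] at this
      rwa [norm_mul, hu, mul_one])
    (right_mem_Icc.mpr (norm_nonneg z))
  rwa [huz] at hle

theorem ball_subset_image_ball (hf : IsSchlicht f) {m ρ : ℝ} (hρ : 0 < ρ) (hρ1 : ρ < 1)
    (hm : ∀ z ∈ sphere 0 ρ, m ≤ ‖f z‖) : ball 0 m ⊆ f '' ball 0 ρ := by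
  rcases le_or_gt m 0 with hm0 | hm0
  · simp [ball_eq_empty.mpr hm0]
  refine subset_image_ball_of_disjoint_image_sphere hf.differentiableOn hf.injOn hρ hρ1
    (convex_ball 0 m).isPreconnected (by simpa [hf.map_zero] using hm0) ?_
  rw [disjoint_right]
  rintro _ ⟨z, hz, rfl⟩ hfz
  exact (mem_ball_zero_iff.mp hfz).not_ge (hm z hz)

theorem exists_hasDerivAt_norm_div_le (hf : IsSchlicht f) {γ : ℝ → ℂ} {γ' : ℂ} {t : ℝ}
    (hγ : HasDerivAt γ γ' t) (hγ0 : γ t ≠ 0) (hγ1 : ‖γ t‖ < 1) :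
    ∃ d ≤ ‖deriv f (γ t) * γ'‖, HasDerivAt (fun s ↦ ‖γ s‖ / (1 + ‖γ s‖) ^ 2) d t := by
  have hnorm : 0 < ‖γ t‖ := norm_pos_iff.mpr hγ0
  refine ⟨_, ?_, (hasDerivAt_div_one_add_sq (by linarith)).comp t
    (hasDerivAt_norm_of_ne_zero hγ hγ0)⟩
  have hre : ‖γ t‖ * (γ' / γ t).re ≤ ‖γ'‖ := by
    rw [← le_div_iff₀' hnorm, ← norm_div]
    exact Complex.re_le_norm _
  calc (1 - ‖γ t‖) / (1 + ‖γ t‖) ^ 3 * (‖γ t‖ * (γ' / γ t).re)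
      ≤ (1 - ‖γ t‖) / (1 + ‖γ t‖) ^ 3 * ‖γ'‖ :=
        mul_le_mul_of_nonneg_left hre (div_nonneg (sub_nonneg.mpr hγ1.le) (by positivity))
    _ ≤ ‖deriv f (γ t)‖ * ‖γ'‖ := mul_le_mul_of_nonneg_right (hf.le_norm_deriv hγ1) (norm_nonneg _)
    _ = ‖deriv f (γ t) * γ'‖ := (norm_mul _ _).symm

theorem eq_zero_of_apply_eq_zero (hf : IsSchlicht f) (hz : z ∈ ball 0 1) (hfz : f z = 0) :
    z = 0 :=
  hf.injOn hz (mem_ball_self one_pos) (hfz.trans hf.map_zero.symm)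

theorem le_norm_of_apply_path_eq_mul (hf : IsSchlicht f) {γ : ℝ → ℂ} {w : ℂ}
    (hγ : DifferentiableOn ℝ γ (Icc 0 1)) (hγb : MapsTo γ (Icc 0 1) (ball 0 1))
    (hfγ : ∀ t ∈ Icc (0 : ℝ) 1, f (γ t) = w * t) : ‖γ 1‖ / (1 + ‖γ 1‖) ^ 2 ≤ ‖w‖ := by
  have h0 : (0 : ℝ) ∈ Icc (0 : ℝ) 1 := left_mem_Icc.mpr zero_le_one
  have h1 : (1 : ℝ) ∈ Icc (0 : ℝ) 1 := right_mem_Icc.mpr zero_le_one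
  have hγ0 : γ 0 = 0 := hf.eq_zero_of_apply_eq_zero (hγb h0) (by simp [hfγ 0 h0])
  rcases eq_or_ne w 0 with rfl | hw
  · simp [hf.eq_zero_of_apply_eq_zero (hγb h1) (by simp [hfγ 1 h1])]
  have hderiv : ∀ t ∈ interior (Icc (0 : ℝ) 1), ∃ d ≤ ‖w‖,
      HasDerivAt (fun s : ℝ ↦ ‖γ s‖ / (1 + ‖γ s‖) ^ 2) d t := by
    intro t ht
    have htI := interior_subset ht
    have hnhds : Icc (0 : ℝ) 1 ∈ 𝓝 t := mem_interior_iff_mem_nhds.mp ht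
    rw [interior_Icc] at ht
    have hγt := (hγ.differentiableAt hnhds).hasDerivAt
    have hγt0 : γ t ≠ 0 := fun h ↦ mul_ne_zero hw (Complex.ofReal_ne_zero.mpr ht.1.ne')
      (by rw [← hfγ t htI, h, hf.map_zero])
    have hspeed : deriv f (γ t) * deriv γ t = w :=
      deriv_mul_eq_of_comp_eventuallyEq_mul
        (hf.differentiableOn.differentiableAt (isOpen_ball.mem_nhds (hγb htI))) hγt
        (by filter_upwards [hnhds] with s hs using hfγ s hs)
    simpa only [hspeed] using
      hf.exists_hasDerivAt_norm_div_le hγt hγt0 (mem_ball_zero_iff.mp (hγb htI))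
  have hcont : ContinuousOn (fun t ↦ ‖γ t‖ / (1 + ‖γ t‖) ^ 2) (Icc 0 1) :=
    hγ.continuousOn.norm.div ((continuousOn_const.add hγ.continuousOn.norm).pow 2)
      fun t _ ↦ by positivity
  have hle := (convex_Icc (0 : ℝ) 1).image_sub_le_mul_sub_of_deriv_le hcont (C := ‖w‖)
    (fun t ht ↦ by
      obtain ⟨d, -, hd⟩ := hderiv t ht
      exact hd.differentiableAt.differentiableWithinAt)
    (fun t ht ↦ by
      obtain ⟨d, hdw, hd⟩ := hderiv t ht
      exact hd.deriv.trans_le hdw) 0 h0 1 h1 zero_le_one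
  simpa [hγ0] using hle

theorem le_norm_of_ball_subset_image (hf : IsSchlicht f) (hz : z ∈ ball 0 1)
    (hball : ball 0 ‖f z‖ ⊆ f '' ball 0 1) : ‖z‖ / (1 + ‖z‖) ^ 2 ≤ ‖f z‖ := by
  set g := Function.invFunOn f (ball 0 1)
  have hgf : LeftInvOn g f (ball 0 1) := hf.injOn.leftInvOn_invFunOn
  have hseg : ∀ t ∈ Icc (0 : ℝ) 1, f z * t ∈ f '' ball 0 1 := by
    rintro t ⟨ht0, ht1⟩
    rcases eq_or_ne (f z) 0 with hfz | hfz
    · exact ⟨z, hz, by rw [hfz, zero_mul]⟩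
    rcases ht1.eq_or_lt with rfl | ht1
    · simpa using mem_image_of_mem f hz
    · refine hball (mem_ball_zero_iff.mpr ?_)
      rw [norm_mul, Complex.norm_of_nonneg ht0]
      exact mul_lt_of_lt_one_right (norm_pos_iff.mpr hfz) ht1
  have hgz : g (f z * (1 : ℝ)) = z := by rw [Complex.ofReal_one, mul_one, hgf hz]
  rw [← hgz]
  have hle := hf.le_norm_of_apply_path_eq_mul (γ := fun t ↦ g (f z * t)) (w := f z)
    (fun t ht ↦ by
      obtain ⟨y, hy, hfy⟩ := hseg t ht
      have hinv := hasDerivAt_invFunOn isOpen_ball hf.differentiableOn hf.injOn hy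
      rw [hfy] at hinv
      exact (hasDerivAt_comp_mul_ofReal
        hinv.differentiableAt).differentiableAt.differentiableWithinAt)
    (fun t ht ↦ Function.invFunOn_mem (hseg t ht))
    (fun t ht ↦ Function.invFunOn_eq (hseg t ht))
  rwa [hgz] at hle ⊢

theorem le_norm (hf : IsSchlicht f) (hz : ‖z‖ < 1) : ‖z‖ / (1 + ‖z‖) ^ 2 ≤ ‖f z‖ := by
  rcases eq_or_ne z 0 with rfl | hz0
  · simp
  obtain ⟨y, hy, hmin⟩ := (isCompact_sphere (0 : ℂ) ‖z‖).exists_isMinOn ⟨z, by simp⟩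
    (hf.differentiableOn.continuousOn.norm.mono
      (sphere_subset_closedBall.trans (closedBall_subset_ball hz)))
  have hball := hf.ball_subset_image_ball (norm_pos_iff.mpr hz0) hz fun w hw ↦ hmin hw
  have hyz : ‖y‖ = ‖z‖ := mem_sphere_zero_iff_norm.mp hy
  calc ‖z‖ / (1 + ‖z‖) ^ 2 = ‖y‖ / (1 + ‖y‖) ^ 2 := by rw [hyz]
    _ ≤ ‖f y‖ := hf.le_norm_of_ball_subset_image (mem_ball_zero_iff.mpr (hyz.trans_lt hz))
      (hball.trans (image_mono (ball_subset_ball hz.le)))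
    _ ≤ ‖f z‖ := hmin (mem_sphere_zero_iff_norm.mpr rfl)

end IsSchlicht

end Growth

section UnitBall

variable {X : Type*} [NormedAddCommGroup X] [NormedSpace ℂ X] {f : X → ℂ}

theorem mapsTo_smul_const_ball {u : X} (hu : ‖u‖ = 1) :
    MapsTo (fun z : ℂ ↦ z • u) (ball 0 1) (ball 0 1) := fun z hz ↦ by
  rw [mem_ball_zero_iff] at hz ⊢
  rwa [norm_smul, hu, mul_one]

theorem isSchlicht_apply_smul_mul (hf : DifferentiableOn ℂ f (ball 0 1)) (hf0 : f 0 = 1)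
    (hinj : InjOn (fun x ↦ f x • x) (ball 0 1)) {u : X} (hu : ‖u‖ = 1) :
    IsSchlicht (fun z ↦ f (z • u) * z) := by
  have hslice : DifferentiableOn ℂ (fun z : ℂ ↦ f (z • u)) (ball 0 1) :=
    hf.comp (by fun_prop) (mapsTo_smul_const_ball hu)
  refine ⟨hslice.mul differentiableOn_id, fun a ha b hb hab ↦ ?_, by simp, ?_⟩
  · have hab' : a • u = b • u := hinj (mapsTo_smul_const_ball hu ha)
      (mapsTo_smul_const_ball hu hb) (by simpa only [smul_smul] using congrArg (· • u) hab)
    exact smul_left_injective ℂ (norm_ne_zero_iff.mp (hu ▸ one_ne_zero)) hab'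
  · have hslice0 : DifferentiableAt ℂ (fun z : ℂ ↦ f (z • u)) 0 :=
      hslice.differentiableAt (ball_mem_nhds 0 one_pos)
    simpa [hf0] using (hslice0.hasDerivAt.fun_mul (hasDerivAt_id' 0)).deriv

end UnitBall

theorem stmt6_general {X : Type*} [NormedAddCommGroup X] [NormedSpace ℂ X]
    (f : X → ℂ) (hf : DifferentiableOn ℂ f (ball (0 : X) 1)) (hf0 : f 0 = 1)
    (F : X → X) (hF : ∀ x ∈ ball (0 : X) 1, F x = f x • x)
    (hinj : InjOn F (ball (0 : X) 1)) :
    ∀ x ∈ ball (0 : X) 1,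
      ‖x‖ / (1 + ‖x‖) ^ 2 ≤ ‖F x‖ ∧ ‖F x‖ ≤ ‖x‖ / (1 - ‖x‖) ^ 2 := by
  intro x hx
  rcases eq_or_ne x 0 with rfl | hx0
  · simp [hF 0 hx]
  set u : X := (‖x‖⁻¹ : ℂ) • x
  have hu : ‖u‖ = 1 := norm_smul_inv_norm hx0
  have hxu : (‖x‖ : ℂ) • u = x :=
    smul_inv_smul₀ (Complex.ofReal_ne_zero.mpr (norm_ne_zero_iff.mpr hx0)) x
  have hschlicht := isSchlicht_apply_smul_mul hf hf0 (hinj.congr hF) hu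
  have hnorm : ‖(‖x‖ : ℂ)‖ = ‖x‖ := Complex.norm_of_nonneg (norm_nonneg x)
  have hFx : ‖f ((‖x‖ : ℂ) • u) * ‖x‖‖ = ‖F x‖ := by
    rw [hxu, hF x hx, norm_mul, norm_smul, hnorm]
  have hlt : ‖(‖x‖ : ℂ)‖ < 1 := hnorm.trans_lt (mem_ball_zero_iff.mp hx)
  have hlower := hschlicht.le_norm hlt
  have hupper := hschlicht.norm_le hlt
  rw [hFx, hnorm] at hlower hupper
  exact ⟨hlower, hupper⟩

/-- **Growth theorem.** Let `F(x) = f(x)·x` be biholomorphic on the unit ball `𝔹` of a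
complex Banach space, with `f` holomorphic and `f(0) = 1`. Then for all `x ∈ 𝔹`,
`‖x‖/(1+‖x‖)² ≤ ‖F(x)‖ ≤ ‖x‖/(1−‖x‖)²`. -/
theorem stmt6 {X : Type*} [NormedAddCommGroup X] [NormedSpace ℂ X] [CompleteSpace X]
    (f : X → ℂ) (hf : DifferentiableOn ℂ f (ball (0 : X) 1)) (hf0 : f 0 = 1)
    (F : X → X) (hF : ∀ x ∈ ball (0 : X) 1, F x = f x • x)
    (hbi : IsBiholoOn F (ball (0 : X) 1)) :
    ∀ x ∈ ball (0 : X) 1,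
      ‖x‖ / (1 + ‖x‖) ^ 2 ≤ ‖F x‖ ∧ ‖F x‖ ≤ ‖x‖ / (1 - ‖x‖) ^ 2 :=
  stmt6_general f hf hf0 F hF hbi.2.1
end
end

section
/- Let f : 𝔹 → ℂ be holomorphic with f(0) = 1, F(x) = f(x)·x for x ∈ 𝔹, and assume F is biholomorphic on 𝔹. Then F(𝔹) contains the ball B_{1/4} = {y ∈ X : ‖y‖ < 1/4}. -/
open Metric Set

noncomputable section

/-!
On the slices `z ↦ z * f (z • u)` through the origin the claim is the Koebe quarter theorem.

If a univalent `f` omits `w` on a disc, then `w - f = g ^ 2` with `g` holomorphic, and `g` never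
takes opposite values: `g z + g ζ ≠ 0` for all `z` and `ζ`. So it suffices to prove Gelfer's
inequality `R * ‖deriv g c‖ ≤ 2 * ‖g c‖` for such functions on `ball c R`.

Spread a positive unit charge over the values of `g` on a circle about `c` and a negative one over
the opposite values. The logarithmic energy of this neutral charge is nonnegative: on the Riemann
sphere the energy kernel is, up to an additive constant, `-log (1 - t) = ∑ t ^ n / n` with
`t = fubiniStudy a b`, and every power of `t` is positive semidefinite. By Jensen's inequality in
each variable, the same energy is at most a positive multiple of
`-log (r * ‖deriv g c‖ / (2 * ‖g c‖))`, where `r` is the radius of the circle.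
-/

open Real Filter Topology ComplexConjugate

/-- Continuous positive semidefinite kernels of finite rank: `K a b` is the real inner product of
the finitely many features `φ i` at `a` and `b`. -/
def IsGramKernel {X : Type*} [TopologicalSpace X] (K : X → X → ℝ) : Prop :=
  ∃ (ι : Type) (_ : Fintype ι) (φ : ι → X → ℝ),
    (∀ i, Continuous (φ i)) ∧ ∀ a b, K a b = ∑ i, φ i a * φ i b

namespace IsGramKernel

variable {X : Type*} [TopologicalSpace X] {K L : X → X → ℝ}

lemma zero : IsGramKernel fun _ _ : X ↦ 0 :=
  ⟨Empty, inferInstance, fun i ↦ i.elim, fun i ↦ i.elim, by simp⟩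

lemma one : IsGramKernel fun _ _ : X ↦ 1 :=
  ⟨Unit, inferInstance, fun _ _ ↦ 1, fun _ ↦ continuous_const, by simp⟩

lemma add (hK : IsGramKernel K) (hL : IsGramKernel L) :
    IsGramKernel fun a b ↦ K a b + L a b := by
  obtain ⟨ι, _, φ, hφ, hK⟩ := hK
  obtain ⟨κ, _, ψ, hψ, hL⟩ := hL
  exact ⟨ι ⊕ κ, inferInstance, Sum.elim φ ψ, Sum.rec hφ hψ, fun a b ↦ by simp [hK, hL]⟩

lemma mul (hK : IsGramKernel K) (hL : IsGramKernel L) :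
    IsGramKernel fun a b ↦ K a b * L a b := by
  obtain ⟨ι, _, φ, hφ, hK⟩ := hK
  obtain ⟨κ, _, ψ, hψ, hL⟩ := hL
  refine ⟨ι × κ, inferInstance, fun p a ↦ φ p.1 a * ψ p.2 a,
    fun p ↦ (hφ p.1).mul (hψ p.2), fun a b ↦ ?_⟩
  simp only [hK, hL, Finset.sum_mul_sum, Fintype.sum_prod_type, mul_mul_mul_comm]

lemma pow (hK : IsGramKernel K) (n : ℕ) : IsGramKernel fun a b ↦ K a b ^ n := by
  induction n with
  | zero => simpa only [pow_zero] using one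
  | succ n ih => simpa only [pow_succ] using ih.mul hK

lemma div_const (hK : IsGramKernel K) {t : ℝ} (ht : 0 ≤ t) :
    IsGramKernel fun a b ↦ K a b / t := by
  obtain ⟨ι, _, φ, hφ, hK⟩ := hK
  refine ⟨ι, inferInstance, fun i a ↦ φ i a / √t, fun i ↦ (hφ i).div_const _, fun a b ↦ ?_⟩
  simp only [hK, Finset.sum_div, div_mul_div_comm, mul_self_sqrt ht]

lemma sum {β : Type*} (s : Finset β) {K : β → X → X → ℝ} (hK : ∀ n, IsGramKernel (K n)) :
    IsGramKernel fun a b ↦ ∑ n ∈ s, K n a b := by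
  classical
  induction s using Finset.induction_on with
  | empty => simpa only [Finset.sum_empty] using zero
  | insert n s hn ih => simpa only [Finset.sum_insert hn] using (hK n).add ih

lemma sub_neg [InvolutiveNeg X] [ContinuousNeg X] (hK : IsGramKernel K)
    (hneg : ∀ a b, K (-a) b = K a (-b)) : IsGramKernel fun a b ↦ K a b - K a (-b) := by
  obtain ⟨ι, _, φ, hφ, hφK⟩ := hK
  refine ⟨ι, inferInstance, fun i a ↦ (φ i a - φ i (-a)) / √2, fun i ↦ ?_, fun a b ↦ ?_⟩
  · exact ((hφ i).sub ((hφ i).comp continuous_neg)).div_const _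
  calc K a b - K a (-b)
    _ = (K a b - K a (-b) - (K (-a) b - K (-a) (-b))) / 2 := by
        rw [hneg a (-b), hneg, neg_neg]
        ring
    _ = ∑ i, (φ i a - φ i (-a)) / √2 * ((φ i b - φ i (-b)) / √2) := by
        simp only [hφK, ← Finset.sum_sub_distrib, Finset.sum_div, div_mul_div_comm,
          mul_self_sqrt zero_le_two, ← sub_mul, ← mul_sub]

end IsGramKernel

lemma circleAverage_sum_mul {ι : Type*} {s : Finset ι} {f : ι → ℂ → ℝ} {c : ℂ} {R : ℝ}
    (hf : ∀ i ∈ s, CircleIntegrable (f i) c R) (t : ι → ℝ) :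
    circleAverage (fun z ↦ ∑ i ∈ s, f i z * t i) c R = ∑ i ∈ s, circleAverage (f i) c R * t i := by
  simp only [mul_comm _ (t _), ← smul_eq_mul]
  rw [circleAverage_fun_sum fun i hi ↦ (hf i hi).const_fun_smul]
  simp only [circleAverage_fun_smul]

namespace IsGramKernel

variable {K : ℂ → ℂ → ℝ} {γ : ℂ → ℂ} {c : ℂ} {R : ℝ}

lemma circleIntegrable_left (hK : IsGramKernel K) (hγ : ContinuousOn γ (sphere c |R|)) (b : ℂ) :
    CircleIntegrable (fun z ↦ K (γ z) b) c R := by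
  obtain ⟨ι, _, φ, hφ, hφK⟩ := hK
  simp only [hφK]
  refine ContinuousOn.circleIntegrable' (continuousOn_finsetSum _ fun i _ ↦ ?_)
  exact ((hφ i).comp_continuousOn hγ).mul continuousOn_const

lemma continuous_circleAverage (hK : IsGramKernel K) (hγ : ContinuousOn γ (sphere c |R|)) :
    Continuous fun b ↦ circleAverage (fun z ↦ K (γ z) b) c R := by
  obtain ⟨ι, _, φ, hφ, hφK⟩ := hK
  have integrable (i : ι) : CircleIntegrable (fun z ↦ φ i (γ z)) c R :=
    ((hφ i).comp_continuousOn hγ).circleIntegrable'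
  simp only [hφK, circleAverage_sum_mul fun i _ ↦ integrable i]
  fun_prop

lemma circleAverage_circleAverage_nonneg (hK : IsGramKernel K)
    (hγ : ContinuousOn γ (sphere c |R|)) :
    0 ≤ circleAverage (fun w ↦ circleAverage (fun z ↦ K (γ z) (γ w)) c R) c R := by
  obtain ⟨ι, _, φ, hφ, hφK⟩ := hK
  have integrable (i : ι) : CircleIntegrable (fun z ↦ φ i (γ z)) c R :=
    ((hφ i).comp_continuousOn hγ).circleIntegrable'
  simp only [hφK, circleAverage_sum_mul fun i _ ↦ integrable i]
  simp only [mul_comm (circleAverage _ _ _), circleAverage_sum_mul fun i _ ↦ integrable i]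
  exact Finset.sum_nonneg fun i _ ↦ mul_self_nonneg _

end IsGramKernel

/-- The squared cosine of the Fubini–Study distance of `a` and `b`, viewed as the points `[1 : a]`
and `[1 : b]` of the Riemann sphere. -/
def fubiniStudy (a b : ℂ) : ℝ := ‖1 + a * conj b‖ ^ 2 / ((1 + ‖a‖ ^ 2) * (1 + ‖b‖ ^ 2))

namespace fubiniStudy

variable {a b : ℂ}

lemma nonneg (a b : ℂ) : 0 ≤ fubiniStudy a b := by unfold fubiniStudy; positivity

lemma neg_left (a b : ℂ) : fubiniStudy (-a) b = fubiniStudy a (-b) := by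
  simp only [fubiniStudy, map_neg, mul_neg, neg_mul, norm_neg]

lemma one_sub (a b : ℂ) :
    1 - fubiniStudy a b = ‖a - b‖ ^ 2 / ((1 + ‖a‖ ^ 2) * (1 + ‖b‖ ^ 2)) := by
  have ha : 1 + ‖a‖ ^ 2 ≠ 0 := by positivity
  have hb : 1 + ‖b‖ ^ 2 ≠ 0 := by positivity
  rw [fubiniStudy, eq_div_iff (mul_ne_zero ha hb), sub_mul, div_mul_cancel₀ _ (mul_ne_zero ha hb)]
  simp only [Complex.sq_norm, Complex.normSq_apply, Complex.add_re, Complex.add_im, Complex.sub_re,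
    Complex.sub_im, Complex.mul_re, Complex.mul_im, Complex.conj_re, Complex.conj_im,
    Complex.one_re, Complex.one_im]
  ring

lemma lt_one (hab : a ≠ b) : fubiniStudy a b < 1 := by
  have : 0 < ‖a - b‖ := norm_pos_iff.mpr (sub_ne_zero.mpr hab)
  rw [← sub_pos, one_sub]
  positivity

protected lemma continuous {Y : Type*} [TopologicalSpace Y] {u v : Y → ℂ} (hu : Continuous u)
    (hv : Continuous v) : Continuous fun y ↦ fubiniStudy (u y) (v y) := by
  unfold fubiniStudy
  exact Continuous.div (by fun_prop) (by fun_prop) fun y ↦ by positivity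

lemma exists_lt_one_of_isCompact {T : Set ℂ} (hT : IsCompact T)
    (hadd : ∀ a ∈ T, ∀ b ∈ T, a + b ≠ 0) :
    ∃ q < 1, 0 ≤ q ∧ ∀ a ∈ T, ∀ b ∈ T, fubiniStudy a (-b) ≤ q := by
  rcases T.eq_empty_or_nonempty with rfl | hne
  · exact ⟨0, one_pos, le_rfl, by simp⟩
  have hcont : Continuous fun p : ℂ × ℂ ↦ fubiniStudy p.1 (-p.2) :=
    fubiniStudy.continuous continuous_fst continuous_snd.neg
  obtain ⟨⟨a, b⟩, ⟨ha, hb⟩, hmax⟩ := (hT.prod hT).exists_isMaxOn (hne.prod hne) hcont.continuousOn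
  have hab : a ≠ -b := fun h ↦ hadd a ha b hb (eq_neg_iff_add_eq_zero.mp h)
  exact ⟨fubiniStudy a (-b), lt_one hab, nonneg a (-b),
    fun a' ha' b' hb' ↦ isMaxOn_iff.mp hmax (a', b') (mk_mem_prod ha' hb')⟩

lemma isGramKernel : IsGramKernel fubiniStudy := by
  refine ⟨Fin 4, inferInstance,
    fun i a ↦ ![1, ‖a‖ ^ 2, √2 * a.re, √2 * a.im] i / (1 + ‖a‖ ^ 2), fun i ↦ ?_, fun a b ↦ ?_⟩
  · refine Continuous.div ?_ (by fun_prop) fun a ↦ by positivity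
    fin_cases i
    exacts [continuous_const, continuous_norm.pow 2, Complex.continuous_re.const_mul √2,
      Complex.continuous_im.const_mul √2]
  · have hcos : ‖1 + a * conj b‖ ^ 2 = 1 * 1 + ‖a‖ ^ 2 * ‖b‖ ^ 2
        + (√2 * a.re) * (√2 * b.re) + (√2 * a.im) * (√2 * b.im) := by
      simp only [Complex.sq_norm, Complex.normSq_apply, Complex.add_re, Complex.add_im,
        Complex.mul_re, Complex.mul_im, Complex.conj_re, Complex.conj_im, Complex.one_re,
        Complex.one_im]
      linear_combination -(a.re * b.re + a.im * b.im) * mul_self_sqrt zero_le_two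
    simp only [fubiniStudy, hcos, div_mul_div_comm, ← Finset.sum_div, Fin.sum_univ_four,
      Matrix.cons_val]

lemma log_norm_sub_div_add (hsub : a ≠ b) (hadd : a + b ≠ 0) :
    log ‖(a - b) / (a + b)‖
      = (log (1 - fubiniStudy a b) - log (1 - fubiniStudy a (-b))) / 2 := by
  have hsub' : ‖a - b‖ ≠ 0 := norm_ne_zero_iff.mpr (sub_ne_zero.mpr hsub)
  have hadd' : ‖a + b‖ ≠ 0 := norm_ne_zero_iff.mpr hadd
  have hd : (1 + ‖a‖ ^ 2) * (1 + ‖b‖ ^ 2) ≠ 0 := by positivity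
  rw [one_sub, one_sub, sub_neg_eq_add, norm_neg, norm_div, log_div hsub' hadd',
    log_div (pow_ne_zero 2 hsub') hd, log_div (pow_ne_zero 2 hadd') hd, log_pow, log_pow]
  push_cast
  ring

end fubiniStudy

/-- The kernel obtained by truncating at order `N` the logarithmic series of
`-log ‖(a - b) / (a + b)‖ = (log (1 - fubiniStudy a (-b)) - log (1 - fubiniStudy a b)) / 2`. -/
def oddLogKernel (N : ℕ) (a b : ℂ) : ℝ :=
  (∑ n ∈ Finset.range N, (fubiniStudy a b ^ (n + 1) - fubiniStudy a (-b) ^ (n + 1)) / (n + 1)) / 2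

lemma isGramKernel_oddLogKernel (N : ℕ) : IsGramKernel (oddLogKernel N) := by
  refine .div_const (.sum _ fun n ↦ .div_const ?_ (by positivity)) zero_le_two
  exact (fubiniStudy.isGramKernel.pow (n + 1)).sub_neg fun a b ↦ by rw [fubiniStudy.neg_left]

lemma log_norm_sub_div_add_le {a b : ℂ} {q : ℝ} (hsub : a ≠ b) (hadd : a + b ≠ 0)
    (hq : fubiniStudy a (-b) ≤ q) (hq1 : q < 1) (N : ℕ) :
    log ‖(a - b) / (a + b)‖ ≤ q ^ (N + 1) / (1 - q) / 2 - oddLogKernel N a b := by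
  set x := fubiniStudy a b
  set y := fubiniStudy a (-b)
  have hx : |x| < 1 := by
    rw [abs_of_nonneg (fubiniStudy.nonneg a b)]
    exact fubiniStudy.lt_one hsub
  have hy0 : 0 ≤ y := fubiniStudy.nonneg a (-b)
  have hy : |y| < 1 := (abs_of_nonneg hy0).trans_lt (hq.trans_lt hq1)
  have hlogx : ∑ n ∈ Finset.range N, x ^ (n + 1) / (n + 1) ≤ -log (1 - x) :=
    sum_le_hasSum _ (fun n _ ↦ div_nonneg (pow_nonneg (fubiniStudy.nonneg a b) _) (by positivity))
      (hasSum_pow_div_log_of_abs_lt_one hx)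
  have hlogy : -(q ^ (N + 1) / (1 - q)) ≤
      ∑ n ∈ Finset.range N, y ^ (n + 1) / (n + 1) + log (1 - y) := by
    refine neg_le_of_abs_le ((abs_log_sub_add_sum_range_le hy N).trans ?_)
    rw [abs_of_nonneg hy0]
    have : 0 < 1 - q := sub_pos.mpr hq1
    have : 0 ≤ q := hy0.trans hq
    gcongr
  have hkernel : oddLogKernel N a b = (∑ n ∈ Finset.range N, x ^ (n + 1) / (n + 1)
      - ∑ n ∈ Finset.range N, y ^ (n + 1) / (n + 1)) / 2 := by
    simp only [oddLogKernel, sub_div, Finset.sum_sub_distrib, x, y]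
  rw [fubiniStudy.log_norm_sub_div_add hsub hadd, hkernel]
  linarith

lemma circleAverage_mono_codiscreteWithin {f₁ f₂ : ℂ → ℝ} {c : ℂ} {R : ℝ} (hR : R ≠ 0)
    (hf₁ : CircleIntegrable f₁ c R) (hf₂ : CircleIntegrable f₂ c R)
    (h : f₁ ≤ᶠ[codiscreteWithin (sphere c |R|)] f₂) :
    circleAverage f₁ c R ≤ circleAverage f₂ c R := by
  have hae : (fun θ ↦ f₁ (circleMap c R θ)) ≤ᵐ[MeasureTheory.volume.restrict (Icc 0 (2 * π))]
      fun θ ↦ f₂ (circleMap c R θ) :=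
    ae_restrict_le_codiscreteWithin measurableSet_Icc
      (codiscreteWithin_mono (subset_univ _) (circleMap_preimage_codiscrete hR h))
  exact smul_le_smul_of_nonneg_left
    (intervalIntegral.integral_mono_ae_restrict two_pi_pos.le hf₁ hf₂ hae)
    (inv_nonneg.mpr two_pi_pos.le)

lemma log_norm_le_circleAverage {f : ℂ → ℂ} {c : ℂ} {R : ℝ} (hR : R ≠ 0)
    (hf : AnalyticOnNhd ℂ f (closedBall c |R|)) (hfc : f c ≠ 0) :
    log ‖f c‖ ≤ circleAverage (fun z ↦ log ‖f z‖) c R := by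
  rw [hf.circleAverage_log_norm hR hfc]
  refine le_add_of_nonneg_left (finsum_nonneg fun u ↦ ?_)
  by_cases hu : u ∈ closedBall c |R|
  · refine mul_nonneg (mod_cast MeromorphicOn.AnalyticOnNhd.divisor_nonneg hf u) ?_
    rcases eq_or_ne u c with rfl | huc
    · simp
    · have hpos : 0 < ‖c - u‖ := norm_sub_pos_iff.mpr huc.symm
      rw [← log_abs, abs_mul, abs_inv, abs_norm, ← div_eq_mul_inv]
      exact log_nonneg ((one_le_div hpos).mpr (by rwa [mem_closedBall, dist_eq_norm'] at hu))
  · simp [hu]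

section Gelfer

variable {g : ℂ → ℂ} {c : ℂ} {r R : ℝ}

lemma eventually_codiscreteWithin_sphere_ne (hg : DifferentiableOn ℂ g (ball c R)) (hr : |r| < R)
    (hderiv : deriv g c ≠ 0) (a : ℂ) : ∀ᶠ z in codiscreteWithin (sphere c |r|), g z ≠ a := by
  have hR : 0 < R := (abs_nonneg r).trans_lt hr
  have hsub : sphere c |r| ⊆ ball c R := sphere_subset_closedBall.trans (closedBall_subset_ball hr)
  have hconst_or := (hg.analyticOnNhd isOpen_ball).eqOn_or_eventually_ne_of_preconnected
    (analyticOnNhd_const (v := a)) (convex_ball c R).isPreconnected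
  refine codiscreteWithin_mono hsub (hconst_or.resolve_left fun hconst ↦ hderiv ?_)
  rw [(hconst.eventuallyEq_of_mem (ball_mem_nhds c hR)).deriv_eq, deriv_const]

lemma analyticOnNhd_sub_div_add (hg : DifferentiableOn ℂ g (ball c R)) (hr : |r| < R) {a : ℂ}
    (ha : ∀ z ∈ ball c R, g z + a ≠ 0) :
    AnalyticOnNhd ℂ (fun z ↦ (g z - a) / (g z + a)) (closedBall c |r|) :=
  (((hg.sub_const a).div (hg.add_const a) ha).analyticOnNhd isOpen_ball).mono
    (closedBall_subset_ball hr)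

lemma circleIntegrable_log_norm_sub_div_add (hg : DifferentiableOn ℂ g (ball c R)) (hr : |r| < R)
    {a : ℂ} (ha : ∀ z ∈ ball c R, g z + a ≠ 0) :
    CircleIntegrable (fun z ↦ log ‖(g z - a) / (g z + a)‖) c r :=
  ((analyticOnNhd_sub_div_add hg hr ha).mono
    sphere_subset_closedBall).meromorphicOn.circleIntegrable_log_norm

lemma log_norm_deriv_div_le_circleAverage (hg : DifferentiableOn ℂ g (ball c R)) (hr0 : r ≠ 0)
    (hr : |r| < R) (hadd : ∀ z ∈ ball c R, ∀ w ∈ ball c R, g z + g w ≠ 0)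
    (hderiv : deriv g c ≠ 0) :
    log (|r| * ‖deriv g c‖ / (2 * ‖g c‖))
      ≤ circleAverage (fun w ↦ log ‖(g w - g c) / (g w + g c)‖) c r := by
  have hR : 0 < R := (abs_nonneg r).trans_lt hr
  have hc : c ∈ ball c R := mem_ball_self hR
  have hgc : g c ≠ 0 := fun h ↦ hadd c hc c hc (by simp [h])
  let φ : ℂ → ℂ := fun w ↦ r * dslope g c w / (g w + g c)
  have hφ : AnalyticOnNhd ℂ φ (closedBall c |r|) := by
    have hslope := (Complex.differentiableOn_dslope (ball_mem_nhds c hR)).mpr hg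
    have hφ_ball : DifferentiableOn ℂ φ (ball c R) :=
      (hslope.const_mul _).div (hg.add_const _) fun z hz ↦ hadd z hz c hc
    exact (hφ_ball.analyticOnNhd isOpen_ball).mono (closedBall_subset_ball hr)
  have hφc : φ c = r * deriv g c / (2 * g c) := by
    simp only [φ, dslope_same, two_mul]
  have hφ_sphere : ∀ w ∈ sphere c |r|, log ‖φ w‖ = log ‖(g w - g c) / (g w + g c)‖ := by
    intro w hw
    have hwc : ‖w - c‖ = |r| := mem_sphere_iff_norm.mp hw
    have hne : w ≠ c := by
      rintro rfl
      exact abs_ne_zero.mpr hr0 (by simpa using hwc.symm)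
    have : |r| ≠ 0 := abs_ne_zero.mpr hr0
    simp only [φ, dslope_of_ne g hne, slope_def_field, norm_div, norm_mul, Complex.norm_real,
      Real.norm_eq_abs, hwc]
    rw [mul_div_cancel₀ _ this]
  calc log (|r| * ‖deriv g c‖ / (2 * ‖g c‖)) = log ‖φ c‖ := by simp [hφc]
    _ ≤ circleAverage (fun w ↦ log ‖φ w‖) c r :=
        log_norm_le_circleAverage hr0 hφ (by
          rw [hφc]
          exact div_ne_zero (mul_ne_zero (mod_cast hr0) hderiv) (mul_ne_zero two_ne_zero hgc))
    _ = _ := circleAverage_congr_sphere hφ_sphere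

lemma log_norm_sub_div_add_le_circleAverage {K : ℂ → ℂ → ℝ} {ε : ℝ} {a : ℂ}
    (hg : DifferentiableOn ℂ g (ball c R)) (hr0 : r ≠ 0) (hr : |r| < R)
    (hderiv : deriv g c ≠ 0) (hK : IsGramKernel K)
    (ha : ∀ z ∈ ball c R, g z + a ≠ 0) (hac : g c ≠ a)
    (hle : ∀ z ∈ sphere c |r|, g z ≠ a → log ‖(g z - a) / (g z + a)‖ ≤ ε - K (g z) a) :
    log ‖(g c - a) / (g c + a)‖ ≤ ε - circleAverage (fun z ↦ K (g z) a) c r := by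
  have hsphere : sphere c |r| ⊆ ball c R :=
    sphere_subset_closedBall.trans (closedBall_subset_ball hr)
  have hK_int := hK.circleIntegrable_left (hg.continuousOn.mono hsphere) a
  have hc : c ∈ ball c R := mem_ball_self ((abs_nonneg r).trans_lt hr)
  calc log ‖(g c - a) / (g c + a)‖
    _ ≤ circleAverage (fun z ↦ log ‖(g z - a) / (g z + a)‖) c r :=
        log_norm_le_circleAverage hr0 (analyticOnNhd_sub_div_add hg hr ha)
          (div_ne_zero (sub_ne_zero.mpr hac) (ha c hc))
    _ ≤ circleAverage (fun z ↦ ε - K (g z) a) c r := by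
        refine circleAverage_mono_codiscreteWithin hr0
          (circleIntegrable_log_norm_sub_div_add hg hr ha)
          ((circleIntegrable_const ε c r).sub hK_int) ?_
        filter_upwards [eventually_codiscreteWithin_sphere_ne hg hr hderiv a,
          self_mem_codiscreteWithin (sphere c |r|)] with z hza hz using hle z hz hza
    _ = ε - circleAverage (fun z ↦ K (g z) a) c r := by
        rw [circleAverage_fun_sub (circleIntegrable_const ε c r) hK_int, circleAverage_const]

lemma log_norm_deriv_div_le_of_isGramKernel {K : ℂ → ℂ → ℝ} {ε : ℝ}
    (hg : DifferentiableOn ℂ g (ball c R)) (hr0 : r ≠ 0)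
    (hr : |r| < R) (hadd : ∀ z ∈ ball c R, ∀ w ∈ ball c R, g z + g w ≠ 0)
    (hderiv : deriv g c ≠ 0) (hK : IsGramKernel K)
    (hle : ∀ z ∈ sphere c |r|, ∀ w ∈ sphere c |r|, g z ≠ g w →
      log ‖(g z - g w) / (g z + g w)‖ ≤ ε - K (g z) (g w)) :
    log (|r| * ‖deriv g c‖ / (2 * ‖g c‖)) ≤ ε := by
  have hsphere : sphere c |r| ⊆ ball c R :=
    sphere_subset_closedBall.trans (closedBall_subset_ball hr)
  have hγ : ContinuousOn g (sphere c |r|) := hg.continuousOn.mono hsphere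
  have hc : c ∈ ball c R := mem_ball_self ((abs_nonneg r).trans_lt hr)
  let U : ℂ → ℝ := fun b ↦ circleAverage (fun z ↦ K (g z) b) c r
  have hU_int : CircleIntegrable (fun w ↦ U (g w)) c r :=
    ((hK.continuous_circleAverage hγ).comp_continuousOn hγ).circleIntegrable'
  calc log (|r| * ‖deriv g c‖ / (2 * ‖g c‖))
    _ ≤ circleAverage (fun w ↦ log ‖(g w - g c) / (g w + g c)‖) c r :=
        log_norm_deriv_div_le_circleAverage hg hr0 hr hadd hderiv
    _ ≤ circleAverage (fun w ↦ ε - U (g w)) c r := by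
        refine circleAverage_mono_codiscreteWithin hr0
          (circleIntegrable_log_norm_sub_div_add hg hr fun z hz ↦ hadd z hz c hc)
          ((circleIntegrable_const ε c r).sub hU_int) ?_
        filter_upwards [eventually_codiscreteWithin_sphere_ne hg hr hderiv (g c),
          self_mem_codiscreteWithin (sphere c |r|)] with w hwc hw
        rw [norm_div, norm_sub_rev, add_comm, ← norm_div]
        exact log_norm_sub_div_add_le_circleAverage hg hr0 hr hderiv hK
          (fun z hz ↦ hadd z hz w (hsphere hw)) hwc.symm fun z hz ↦ hle z hz w hw
    _ = ε - circleAverage (fun w ↦ U (g w)) c r := by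
        rw [circleAverage_fun_sub (circleIntegrable_const ε c r) hU_int, circleAverage_const]
    _ ≤ ε := sub_le_self ε (hK.circleAverage_circleAverage_nonneg hγ)

lemma abs_mul_norm_deriv_le_of_add_ne_zero (hg : DifferentiableOn ℂ g (ball c R)) (hr : |r| < R)
    (hadd : ∀ z ∈ ball c R, ∀ w ∈ ball c R, g z + g w ≠ 0) :
    |r| * ‖deriv g c‖ ≤ 2 * ‖g c‖ := by
  rcases eq_or_ne r 0 with rfl | hr0
  · simp
  rcases eq_or_ne (deriv g c) 0 with hderiv | hderiv
  · simp [hderiv]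
  have hc : c ∈ ball c R := mem_ball_self ((abs_nonneg r).trans_lt hr)
  have hgc : g c ≠ 0 := fun h ↦ hadd c hc c hc (by simp [h])
  have hsphere : sphere c |r| ⊆ ball c R :=
    sphere_subset_closedBall.trans (closedBall_subset_ball hr)
  obtain ⟨q, hq1, hq0, hq⟩ := fubiniStudy.exists_lt_one_of_isCompact
    ((isCompact_sphere c |r|).image_of_continuousOn (hg.continuousOn.mono hsphere))
    (forall_mem_image.mpr fun z hz ↦ forall_mem_image.mpr fun w hw ↦
      hadd z (hsphere hz) w (hsphere hw))
  have hbound (N : ℕ) :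
      log (|r| * ‖deriv g c‖ / (2 * ‖g c‖)) ≤ q ^ (N + 1) / (1 - q) / 2 :=
    log_norm_deriv_div_le_of_isGramKernel hg hr0 hr hadd hderiv (isGramKernel_oddLogKernel N)
      fun z hz w hw hzw ↦ log_norm_sub_div_add_le hzw (hadd z (hsphere hz) w (hsphere hw))
        (hq _ (mem_image_of_mem g hz) _ (mem_image_of_mem g hw)) hq1 N
  have hlim : Tendsto (fun N : ℕ ↦ q ^ (N + 1) / (1 - q) / 2) atTop (𝓝 0) := by
    simpa using (((tendsto_pow_atTop_nhds_zero_of_lt_one hq0 hq1).comp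
      (tendsto_add_atTop_nat 1)).div_const (1 - q)).div_const 2
  have hlog : log (|r| * ‖deriv g c‖ / (2 * ‖g c‖)) ≤ 0 := ge_of_tendsto' hlim hbound
  have hpos : 0 < |r| * ‖deriv g c‖ / (2 * ‖g c‖) := by positivity
  rwa [log_nonpos_iff hpos.le, div_le_one (by positivity)] at hlog

theorem mul_norm_deriv_le_of_add_ne_zero (hg : DifferentiableOn ℂ g (ball c R))
    (hadd : ∀ z ∈ ball c R, ∀ w ∈ ball c R, g z + g w ≠ 0) :
    R * ‖deriv g c‖ ≤ 2 * ‖g c‖ := by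
  rcases le_or_gt R 0 with hR | hR
  · exact (mul_nonpos_of_nonpos_of_nonneg hR (norm_nonneg _)).trans (by positivity)
  have hlim : Tendsto (fun r ↦ r * ‖deriv g c‖) (𝓝[<] R) (𝓝 (R * ‖deriv g c‖)) :=
    (tendsto_id.mul_const _).mono_left nhdsWithin_le_nhds
  refine le_of_tendsto hlim ?_
  filter_upwards [Ioo_mem_nhdsLT hR] with r hr
  rw [← abs_of_pos hr.1]
  exact abs_mul_norm_deriv_le_of_add_ne_zero hg ((abs_of_pos hr.1).trans_lt hr.2) hadd

end Gelfer

lemma hasDerivAt_of_sq_eventuallyEq {𝕜 : Type*} [NontriviallyNormedField 𝕜] [NeZero (2 : 𝕜)]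
    {g h : 𝕜 → 𝕜} {h' a : 𝕜} (hg : ContinuousAt g a) (hga : g a ≠ 0)
    (hh : HasDerivAt h h' a) (hsq : ∀ᶠ z in 𝓝 a, g z ^ 2 = h z) :
    HasDerivAt g (h' / (2 * g a)) a := by
  have hsum : Tendsto (fun z ↦ g z + g a) (𝓝 a) (𝓝 (2 * g a)) := by
    simpa only [two_mul] using hg.tendsto.add_const (g a)
  have hsum0 : 2 * g a ≠ 0 := mul_ne_zero two_ne_zero hga
  rw [hasDerivAt_iff_tendsto_slope] at hh ⊢
  refine (hh.div (hsum.mono_left nhdsWithin_le_nhds) hsum0).congr' ?_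
  filter_upwards [nhdsWithin_le_nhds hsq, nhdsWithin_le_nhds (hsum.eventually_ne hsum0)]
    with z hz hz0
  rw [Pi.div_apply, slope_def_field, slope_def_field, ← hz, ← hsq.self_of_nhds, sq_sub_sq,
    div_div, mul_comm (g z + g a), mul_div_mul_right _ _ hz0]

theorem exists_differentiableOn_sq_eq {h : ℂ → ℂ} {U : Set ℂ} (hUo : IsOpen U)
    (hUc : IsSimplyConnected U) (hh : DifferentiableOn ℂ h U) (h0 : ∀ z ∈ U, h z ≠ 0) :
    ∃ g : ℂ → ℂ, DifferentiableOn ℂ g U ∧ ∀ z, g z ^ 2 = h z := by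
  obtain ⟨g, hg, hsq⟩ := Complex.exists_continuousOn_pow_eq hUc hUo hh.continuousOn
    (by rintro ⟨z, hz, hz0⟩; exact h0 z hz hz0) two_ne_zero
  refine ⟨g, fun z hz ↦ ?_, hsq⟩
  have hz_nhds : U ∈ 𝓝 z := hUo.mem_nhds hz
  have hgz : g z ≠ 0 := fun hgz ↦ h0 z hz (by rw [← hsq, hgz, zero_pow two_ne_zero])
  have hderiv := hasDerivAt_of_sq_eventuallyEq (hg.continuousAt hz_nhds) hgz
    (hh.differentiableAt hz_nhds).hasDerivAt (.of_forall hsq)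
  exact hderiv.differentiableAt.differentiableWithinAt

lemma isSimplyConnected_ball {c : ℂ} {R : ℝ} (hR : 0 < R) : IsSimplyConnected (ball c R) := by
  have := (convex_ball c R).contractibleSpace (nonempty_ball.mpr hR)
  exact SimplyConnectedSpace.ofContractible _

theorem mul_norm_deriv_le_of_notMem_image {f : ℂ → ℂ} {c w : ℂ} {R : ℝ} (hR : 0 < R)
    (hf : DifferentiableOn ℂ f (ball c R)) (hinj : InjOn f (ball c R)) (hw : w ∉ f '' ball c R) :
    R * ‖deriv f c‖ ≤ 4 * ‖w - f c‖ := by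
  have hfw : ∀ z ∈ ball c R, w - f z ≠ 0 := fun z hz h ↦ hw ⟨z, hz, (sub_eq_zero.mp h).symm⟩
  obtain ⟨g, hg, hsq⟩ := exists_differentiableOn_sq_eq isOpen_ball (isSimplyConnected_ball hR)
    (hf.const_sub w) hfw
  have hadd : ∀ z ∈ ball c R, ∀ ζ ∈ ball c R, g z + g ζ ≠ 0 := by
    intro z hz ζ hζ h
    have hfz : f z = f ζ := by
      rw [← sub_right_inj (a := w), ← hsq, ← hsq, eq_neg_of_add_eq_zero_left h, neg_sq]
    obtain rfl := hinj hz hζ hfz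
    exact hfw z hz (by rw [← hsq, self_eq_neg.mp (eq_neg_of_add_eq_zero_left h), sq, zero_mul])
  have hderiv : deriv f c = -(2 * g c * deriv g c) := by
    have hgc := (hg.differentiableAt (ball_mem_nhds c hR)).hasDerivAt
    have hf_eq : f = fun z ↦ w - g z ^ 2 := funext fun z ↦ by rw [hsq, sub_sub_cancel]
    rw [hf_eq]
    simpa using ((hgc.pow 2).const_sub w).deriv
  calc R * ‖deriv f c‖ = 2 * ‖g c‖ * (R * ‖deriv g c‖) := by
        rw [hderiv, norm_neg, norm_mul, norm_mul, Complex.norm_two]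
        ring
    _ ≤ 2 * ‖g c‖ * (2 * ‖g c‖) := by
        exact mul_le_mul_of_nonneg_left (mul_norm_deriv_le_of_add_ne_zero hg hadd) (by positivity)
    _ = 4 * ‖w - f c‖ := by
        rw [← hsq, norm_pow]
        ring

theorem ball_subset_image_ball_of_injOn {f : ℂ → ℂ} {c : ℂ} {R : ℝ}
    (hf : DifferentiableOn ℂ f (ball c R)) (hinj : InjOn f (ball c R)) :
    ball (f c) (R * ‖deriv f c‖ / 4) ⊆ f '' ball c R := by
  intro w hw
  rw [mem_ball, dist_eq_norm] at hw
  have hR : 0 < R :=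
    pos_of_mul_pos_left (by linarith [norm_nonneg (w - f c)]) (norm_nonneg (deriv f c))
  by_contra hwf
  linarith [mul_norm_deriv_le_of_notMem_image hR hf hinj hwf]

theorem stmt7_general {X : Type*} [NormedAddCommGroup X] [NormedSpace ℂ X]
    (f : X → ℂ) (hf : DifferentiableOn ℂ f (ball (0 : X) 1))
    (F : X → X) (hF : ∀ x ∈ ball (0 : X) 1, F x = f x • x)
    (hinj : InjOn F (ball (0 : X) 1)) :
    ball (0 : X) (‖f 0‖ / 4) ⊆ F '' ball (0 : X) 1 := by
  intro y hy
  rw [mem_ball_zero_iff] at hy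
  rcases eq_or_ne y 0 with rfl | hy0
  · exact ⟨0, mem_ball_self one_pos, by rw [hF 0 (mem_ball_self one_pos), smul_zero]⟩
  obtain ⟨u, hu, hyu⟩ : ∃ u : X, ‖u‖ = 1 ∧ (‖y‖ : ℂ) • u = y :=
    ⟨(‖y‖ : ℂ)⁻¹ • y, by simp [norm_smul, hy0], by simp [smul_smul, hy0]⟩
  have hmem : MapsTo (· • u) (ball (0 : ℂ) 1) (ball (0 : X) 1) := fun z hz ↦ by
    simpa [norm_smul, hu] using hz
  let p : ℂ → ℂ := fun z ↦ z * f (z • u)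
  have hFp : ∀ z ∈ ball (0 : ℂ) 1, F (z • u) = p z • u := fun z hz ↦ by
    rw [hF _ (hmem hz), smul_smul, mul_comm]
  have hslice : DifferentiableOn ℂ (fun z : ℂ ↦ f (z • u)) (ball 0 1) :=
    hf.comp (by fun_prop) hmem
  have hp : DifferentiableOn ℂ p (ball 0 1) := differentiableOn_id.mul hslice
  have hp_inj : InjOn p (ball 0 1) := fun z hz w hw hzw ↦ by
    have hu0 : u ≠ 0 := norm_ne_zero_iff.mp (hu ▸ one_ne_zero)
    exact smul_left_injective ℂ hu0
      (hinj (hmem hz) (hmem hw) (by rw [hFp z hz, hFp w hw, hzw]))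
  have hp_deriv : deriv p 0 = f 0 := by
    have : HasDerivAt p _ 0 := (hasDerivAt_id (0 : ℂ)).mul
      (hslice.differentiableAt (ball_mem_nhds 0 one_pos)).hasDerivAt
    simpa using this.deriv
  obtain ⟨z, hz, hpz⟩ := ball_subset_image_ball_of_injOn hp hp_inj
    (show (‖y‖ : ℂ) ∈ ball (p 0) (1 * ‖deriv p 0‖ / 4) by simpa [p, hp_deriv] using hy)
  exact ⟨z • u, hmem hz, by rw [hFp z hz, hpz, hyu]⟩

/-- **Covering theorem.** Let `F(x) = f(x)·x` be biholomorphic on the unit ball `𝔹` of a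
complex Banach space, with `f` holomorphic and `f(0) = 1`. Then `F(𝔹)` contains the ball
`B_{1/4}`. -/
theorem stmt7 {X : Type*} [NormedAddCommGroup X] [NormedSpace ℂ X] [CompleteSpace X]
    (f : X → ℂ) (hf : DifferentiableOn ℂ f (ball (0 : X) 1)) (hf0 : f 0 = 1)
    (F : X → X) (hF : ∀ x ∈ ball (0 : X) 1, F x = f x • x)
    (hbi : IsBiholoOn F (ball (0 : X) 1)) :
    ball (0 : X) (1 / 4) ⊆ F '' ball (0 : X) 1 := by
  simpa only [hf0, norm_one] using stmt7_general f hf F hF hbi.2.1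
end
end
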